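/- For every positive integer k there exist constants C, D > 0 depending only on k with the following property: let ε > 0 and let B_1, …, B_r : G_1 × ⋯ × G_k → H be multiaffine maps into a finite-dimensional 𝔽-vector space H. For each λ ∈ 𝔽^r let Z_λ = {x ∈ G_1 × ⋯ × G_k : Σ_{i∈[r]} λ_i B_i(x) = 0}. Then there exist s ≤ C·(r·log_{|𝔽|}(|𝔽|·ε^{-1}))^D and a multiaffine map β : G_1 × ⋯ × G_k → 𝔽^s such that for each λ ∈ 𝔽^r the layers of β internally ε-approximate Z_λ. -/

import Mathlib

/-- A map `f : G 0 × ⋯ × G (k-1) → H` between `𝔽`-vector spaces is *multiaffine*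
if it is affine in each coordinate separately, i.e. fixing all coordinates but the
`i`-th one yields a map of the form `y ↦ g y + h` with `g` linear. -/
def IsMultiaffine (𝔽 : Type*) [Field 𝔽] {ι : Type*} [DecidableEq ι] {G : ι → Type*}
    [∀ i, AddCommGroup (G i)] [∀ i, Module 𝔽 (G i)]
    {H : Type*} [AddCommGroup H] [Module 𝔽 H] (f : (∀ i, G i) → H) : Prop :=
  ∀ (i : ι) (x : ∀ j, G j), ∃ (g : G i →ₗ[𝔽] H) (h : H),
    ∀ y : G i, f (Function.update x i y) = g y + h

/-!
A multilinear map over a finite field `𝔽` whose zeros have density at least `|𝔽| ^ (-d)` has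
partition rank polynomial in `d`. To see this, start at a random zero and resample the coordinates
one after the other subject to remaining a zero: with positive probability all the slices met have
codimension at most `d`. Over a large enough field, such a walk through slices with a fixed
nonvanishing maximal minor can be parametrised by polynomials. This gives boundedly many equations
(at most `d` for each step) which, near a suitable point, force the tensor to vanish; the tensor
itself therefore lies in the ideal that their multihomogeneous components generate, and comparing
terms of multidegree `(1, …, 1)` writes it as a sum of products with few terms. Extending scalars
and descending again removes the assumption that the field is large.

A multiaffine map is a sum of maps, each multilinear in the coordinates of some index set. If a
combination of such maps has a dense zero set and `I` is a maximal index set, the iterated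
difference in the directions `I` isolates the part of the combination that is multilinear on `I`,
so that part has small partition rank. Decompositions of a basis of the span of all these
combinations serve all of them at once; on a fiber of the lower-degree factors that occur in them,
the parts for `I` become combinations of the complementary factors, which live on smaller index
sets. Combinations whose zero set is sparse need no layers at all. Removing the maximal index sets
one by one, and recording in `β` the factors that were fixed, one is left with the empty family.
-/

universe s t u v w

namespace InnerApproximation

open Function MvPolynomial Matrix
open scoped BigOperators

section KernelProjection

variable {m n κ : Type*} [DecidableEq n] [Fintype κ] [DecidableEq κ] {R : Type*} [CommRing R]

/-- The adjugate form of the projection onto the kernel of `F` along the columns `cols`, scaled by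
the minor with rows `rows` and columns `cols` so that no division is needed. It takes values in the
kernel as soon as that minor is maximal, see `exists_maximal_minor`. -/
noncomputable def kernelProj (F : Matrix m n R) (rows : κ → m) (cols : κ → n) : Matrix n n R :=
  (F.submatrix rows cols).det • 1 -
    (1 : Matrix n n R).submatrix id cols * (F.submatrix rows cols).adjugate * F.submatrix rows id

theorem kernelProj_map {R' : Type*} [CommRing R'] (f : R →+* R') (F : Matrix m n R) (rows : κ → m)
    (cols : κ → n) : (kernelProj F rows cols).map f = kernelProj (F.map f) rows cols := by
  have hadj := f.map_adjugate (F.submatrix rows cols)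
  have hdet := f.map_det (F.submatrix rows cols)
  simp only [RingHom.mapMatrix_apply, ← submatrix_map] at hadj hdet
  rw [kernelProj, kernelProj, Matrix.map_sub f (map_sub f), Matrix.map_mul, Matrix.map_mul, hadj,
    Matrix.map_smul' _ _ _ (map_mul f), hdet, Matrix.map_one f (map_zero f) (map_one f),
    ← submatrix_map, ← submatrix_map, Matrix.map_one f (map_zero f) (map_one f)]

variable [Fintype n]

theorem kernelProj_mulVec_of_eq_zero {F : Matrix m n R} {rows : κ → m} {cols : κ → n} {v : n → R}
    (hv : ∀ j, (F *ᵥ v) (rows j) = 0) :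
    kernelProj F rows cols *ᵥ v = (F.submatrix rows cols).det • v := by
  have hv' : F.submatrix rows id *ᵥ v = 0 := funext hv
  rw [kernelProj, sub_mulVec, ← mulVec_mulVec, hv', mulVec_zero, sub_zero, smul_mulVec,
    one_mulVec]

theorem mul_kernelProj (F : Matrix m n R) (rows : κ → m) (cols : κ → n) :
    F * kernelProj F rows cols = (F.submatrix rows cols).det • F -
      F.submatrix id cols * ((F.submatrix rows cols).adjugate * F.submatrix rows id) := by
  have hcols : F * (1 : Matrix n n R).submatrix id cols = F.submatrix id cols :=
    mul_submatrix_one (Equiv.refl n) cols F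
  rw [kernelProj, Matrix.mul_sub, Matrix.mul_assoc, ← Matrix.mul_assoc F, hcols, Matrix.mul_smul,
    Matrix.mul_one]

theorem det_mul_eq_of_det_fromBlocks_eq_zero [IsDomain R] {A : Matrix κ κ R}
    {B : Matrix κ Unit R} {C : Matrix Unit κ R} {D : Matrix Unit Unit R} (hA : A.det ≠ 0)
    (h : (fromBlocks A B C D).det = 0) : A.det • D = C * (A.adjugate * B) := by
  have hmul : fromBlocks A B C D * fromBlocks A.adjugate (-(A.adjugate * B)) 0 (A.det • 1) =
      fromBlocks (A.det • 1) 0 (C * A.adjugate) (A.det • D - C * (A.adjugate * B)) := by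
    rw [fromBlocks_multiply, Matrix.mul_neg, ← Matrix.mul_assoc A, mul_adjugate]
    simp [sub_eq_neg_add]
  have hdet := congrArg det hmul
  rw [det_mul, h, zero_mul, det_fromBlocks_zero₁₂, det_smul, det_one, mul_one,
    det_unique (_ - _)] at hdet
  ext i j
  exact sub_eq_zero.1 ((mul_eq_zero.1 hdet.symm).resolve_left (pow_ne_zero _ hA))

theorem mul_kernelProj_eq_zero [IsDomain R] {F : Matrix m n R} {rows : κ → m} {cols : κ → n}
    (hdet : (F.submatrix rows cols).det ≠ 0)
    (hmax : ∀ (r : κ ⊕ Unit → m) (s : κ ⊕ Unit → n), (F.submatrix r s).det = 0) :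
    F * kernelProj F rows cols = 0 := by
  rw [mul_kernelProj, sub_eq_zero]
  ext h e
  have hblock := hmax (Sum.elim rows fun _ => h) (Sum.elim cols fun _ => e)
  rw [← fromBlocks_toBlocks (F.submatrix _ _)] at hblock
  exact congrFun₂ (det_mul_eq_of_det_fromBlocks_eq_zero hdet hblock) () ()

theorem exists_maximal_minor [IsDomain R] (F : Matrix m n R) {d : ℕ}
    (hd : ∀ (r : Fin (d + 1) → m) (s : Fin (d + 1) → n), (F.submatrix r s).det = 0) :
    ∃ ρ ≤ d, ∃ (rows : Fin ρ → m) (cols : Fin ρ → n),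
      (F.submatrix rows cols).det ≠ 0 ∧ F * kernelProj F rows cols = 0 := by
  classical
  have hex : ∃ ρ, ∀ (r : Fin ρ → m) (s : Fin ρ → n), (F.submatrix r s).det = 0 := ⟨d + 1, hd⟩
  have hvanish := Nat.find_spec hex
  have hle : Nat.find hex ≤ d + 1 := Nat.find_min' hex hd
  rcases hρ : Nat.find hex with _ | ρ
  · rw [hρ] at hvanish
    exact absurd (hvanish Fin.elim0 Fin.elim0) (by simp)
  rw [hρ] at hvanish hle
  obtain ⟨rows, cols, hdet⟩ : ∃ (rows : Fin ρ → m) (cols : Fin ρ → n),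
      (F.submatrix rows cols).det ≠ 0 := by
    simpa using Nat.find_min hex (m := ρ) (by lia)
  refine ⟨ρ, by lia, rows, cols, hdet, mul_kernelProj_eq_zero hdet fun r s => ?_⟩
  let e : Fin (ρ + 1) ≃ Fin ρ ⊕ Unit :=
    finSumFinEquiv.symm.trans (Equiv.sumCongr (.refl _) finOneEquiv)
  rw [← det_submatrix_equiv_self e (F.submatrix r s), submatrix_submatrix]
  exact hvanish _ _

end KernelProjection

section ResamplingWalk

variable {ι : Type*} [DecidableEq ι]

theorem sum_sum_update [Fintype ι] {Y : ι → Type*} [∀ i, Fintype (Y i)] {A : Type*}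
    [AddCommMonoid A] (i : ι) (f : (∀ i, Y i) → A) :
    ∑ x, ∑ v : Y i, f (update x i v) = Fintype.card (Y i) • ∑ x, f x := by
  let swap : (∀ i, Y i) × Y i ≃ (∀ i, Y i) × Y i :=
    { toFun := fun p => (update p.1 i p.2, p.1 i)
      invFun := fun p => (update p.1 i p.2, p.1 i)
      left_inv := fun p => by simp
      right_inv := fun p => by simp }
  calc ∑ x, ∑ v : Y i, f (update x i v) = ∑ p, f (swap p).1 := by
        rw [Fintype.sum_prod_type]; rfl
    _ = ∑ p : (∀ i, Y i) × Y i, f p.1 := swap.sum_comp fun p => f p.1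
    _ = Fintype.card (Y i) • ∑ x, f x := by
        simp only [Fintype.sum_prod_type, Finset.sum_const, Finset.card_univ, Finset.smul_sum]

variable {K : Type*} [CommSemiring K] {V : ι → Type*} [∀ i, AddCommMonoid (V i)]
  [∀ i, Module K (V i)] [∀ i, Fintype (V i)] {W : Type*} [AddCommMonoid W] [Module K W]
  [DecidableEq W]
  (F : MultilinearMap K V W)

/-- The values of the coordinate `i` for which the point `x`, changed only there, is a zero of
`F`. -/
noncomputable def sliceZeros (i : ι) (x : ∀ i, V i) : Finset (V i) := {v | F (update x i v) = 0}

@[simp] theorem mem_sliceZeros {i : ι} {x : ∀ i, V i} {v : V i} :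
    v ∈ sliceZeros F i x ↔ F (update x i v) = 0 := by
  simp [sliceZeros]

@[simp] theorem sliceZeros_update (i : ι) (x : ∀ i, V i) (v : V i) :
    sliceZeros F i (update x i v) = sliceZeros F i x := by
  ext; simp

/-- One step of the random walk that resamples the coordinate `i` uniformly subject to `F = 0`,
acting on observables. -/
noncomputable def resample (i : ι) (φ : (∀ i, V i) → ℝ) (x : ∀ i, V i) : ℝ :=
  𝔼 v ∈ sliceZeros F i x, φ (update x i v)

/-- The expected value of an observable after resampling successively all the coordinates in a
list, the last one first. -/
noncomputable def walk : List ι → ((∀ i, V i) → ℝ) → (∀ i, V i) → ℝ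
  | [], φ => φ
  | i :: l, φ => walk l (resample F i φ)

variable {F}

theorem resample_nonneg {i : ι} {φ : (∀ i, V i) → ℝ} (hφ : 0 ≤ φ) : 0 ≤ resample F i φ :=
  fun _ => Finset.expect_nonneg fun _ _ => hφ _

theorem walk_nonneg {l : List ι} {φ : (∀ i, V i) → ℝ} (hφ : 0 ≤ φ) : 0 ≤ walk F l φ := by
  induction l generalizing φ with
  | nil => exact hφ
  | cons i l ih => exact ih (resample_nonneg hφ)

variable (F)

/-- The indicator of the points at which the zeros in direction `i` have density at most
`1 / m`. -/
noncomputable def thinSlice (m : ℕ) (i : ι) (x : ∀ i, V i) : ℝ :=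
  if (sliceZeros F i x).card * m ≤ Fintype.card (V i) then 1 else 0

/-- The expected number of thin slices met along the walk. -/
noncomputable def thinness (m : ℕ) : List ι → (∀ i, V i) → ℝ
  | [], _ => 0
  | i :: l, a => walk F l (thinSlice F m i) a + thinness m l a

theorem thinSlice_nonneg (m : ℕ) (i : ι) : 0 ≤ thinSlice F m i := fun x => by
  unfold thinSlice; split_ifs <;> norm_num

theorem thinness_nonneg (m : ℕ) (l : List ι) : 0 ≤ thinness F m l := by
  induction l with
  | nil => exact le_rfl
  | cons i l ih => exact add_nonneg (walk_nonneg (thinSlice_nonneg F m i)) ih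

variable [Fintype ι]

theorem card_mul_sum_zeros (i : ι) (φ : (∀ i, V i) → ℝ) :
    Fintype.card (V i) * ∑ x with F x = 0, φ x =
      ∑ x, ∑ v ∈ sliceZeros F i x, φ (update x i v) := by
  simp only [sliceZeros, Finset.sum_filter, ← nsmul_eq_mul]
  exact (sum_sum_update i fun x => if F x = 0 then φ x else 0).symm

theorem sum_resample (i : ι) (φ : (∀ i, V i) → ℝ) :
    ∑ x with F x = 0, resample F i φ x = ∑ x with F x = 0, φ x := by
  have hcard : (Fintype.card (V i) : ℝ) ≠ 0 := by
    exact_mod_cast (Fintype.card_pos_iff.2 ⟨(0 : V i)⟩).ne'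
  apply mul_left_cancel₀ hcard
  simp only [card_mul_sum_zeros, resample, sliceZeros_update, update_idem, Finset.sum_const,
    Finset.card_smul_expect]

theorem sum_walk (l : List ι) (φ : (∀ i, V i) → ℝ) :
    ∑ x with F x = 0, walk F l φ x = ∑ x with F x = 0, φ x := by
  induction l generalizing φ with
  | nil => rfl
  | cons i l ih => rw [walk, ih, sum_resample]

theorem sum_thinSlice_mul_le (m : ℕ) (i : ι) :
    (∑ x with F x = 0, thinSlice F m i x) * m ≤ Fintype.card (∀ i, V i) := by
  have hcard : (0 : ℝ) < Fintype.card (V i) := by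
    exact_mod_cast Fintype.card_pos_iff.2 ⟨(0 : V i)⟩
  apply le_of_mul_le_mul_left _ hcard
  rw [← mul_assoc, card_mul_sum_zeros, Finset.sum_mul, mul_comm, ← nsmul_eq_mul,
    ← Finset.card_univ, ← Finset.sum_const]
  refine Finset.sum_le_sum fun x _ => ?_
  simp only [thinSlice, sliceZeros_update, Finset.sum_const, nsmul_eq_mul]
  split_ifs with hthin
  · rw [mul_one]; exact_mod_cast hthin
  · simp

theorem sum_thinness_mul_le (m : ℕ) (l : List ι) :
    (∑ x with F x = 0, thinness F m l x) * m ≤ l.length * Fintype.card (∀ i, V i) := by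
  induction l with
  | nil => simp [thinness]
  | cons i l ih =>
    simp only [thinness, Finset.sum_add_distrib, sum_walk, add_mul, List.length_cons,
      Nat.cast_add, Nat.cast_one, one_mul, add_comm (l.length * _ : ℝ)]
    exact add_le_add (sum_thinSlice_mul_le F m i) ih

theorem exists_thinness_lt_half {m : ℕ} {l : List ι}
    (h : 2 * l.length * Fintype.card (∀ i, V i) < Finset.card {x | F x = 0} * m) :
    ∃ a, F a = 0 ∧ thinness F m l a < 1 / 2 := by
  by_contra! hcon
  have hlower : (Finset.card {x | F x = 0} : ℝ) * (1 / 2) ≤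
      ∑ x with F x = 0, thinness F m l x := by
    rw [← nsmul_eq_mul]
    exact Finset.card_nsmul_le_sum _ _ _ fun x hx => hcon x (by simpa using hx)
  have hupper := sum_thinness_mul_le F m l
  have h' : (2 * l.length * Fintype.card (∀ i, V i) : ℝ) < Finset.card {x | F x = 0} * m := by
    exact_mod_cast h
  have hm := mul_le_mul_of_nonneg_right hlower (Nat.cast_nonneg (α := ℝ) m)
  linarith

end ResamplingWalk

section SchwartzZippel

variable {K : Type*} [Field K] [Fintype K] [DecidableEq K]

theorem card_le_two_mul_card_eval_ne_zero {σ : Type*} [Fintype σ] [DecidableEq σ]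
    {p : MvPolynomial σ K} (hp : p ≠ 0) (hdeg : 2 * p.totalDegree ≤ Fintype.card K) :
    Fintype.card (σ → K) ≤ 2 * Finset.card {u : σ → K | eval u p ≠ 0} := by
  let e := Fintype.equivFin σ
  have hcard : Finset.card {u ∈ Fintype.piFinset fun _ => Finset.univ | eval u (rename e p) = 0} =
      Finset.card {u : σ → K | eval u p = 0} := by
    rw [Fintype.piFinset_univ]
    refine Finset.card_equiv (e.symm.arrowCongr (.refl K)) fun u => ?_
    simp [eval_rename, Equiv.arrowCongr, Function.comp_def]
  have hsz := schwartz_zippel_totalDegree ((rename_injective e e.injective).ne_iff' (map_zero _)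
    |>.2 hp) (Finset.univ : Finset K)
  rw [hcard, Finset.card_univ, div_le_div_iff₀ (by have := Fintype.card_pos (α := K); positivity)
    (by exact_mod_cast Fintype.card_pos (α := K))] at hsz
  have hsz' : Finset.card {u : σ → K | eval u p = 0} * Fintype.card K ≤
      p.totalDegree * Fintype.card (σ → K) := by
    rw [Fintype.card_fun]
    refine le_trans (by exact_mod_cast hsz) (Nat.mul_le_mul_right _ (totalDegree_rename_le _ _))
  have hsplit := Finset.card_filter_add_card_filter_not (s := Finset.univ)
    fun u : σ → K => eval u p = 0
  rw [Finset.card_univ] at hsplit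
  have hhalf : 2 * Finset.card {u : σ → K | eval u p = 0} ≤ Fintype.card (σ → K) := by
    refine Nat.le_of_mul_le_mul_right ?_ (Fintype.card_pos (α := K))
    calc _ ≤ 2 * p.totalDegree * Fintype.card (σ → K) := by linarith
      _ ≤ _ := by rw [mul_comm (Fintype.card (σ → K))]; gcongr
  change _ ≤ 2 * Finset.card {u : σ → K | ¬ eval u p = 0}
  lia

end SchwartzZippel

section KernelCounting

theorem expect_comp_addMonoidHom {A B : Type*} [AddGroup A] [Fintype A] [AddGroup B] (f : A →+ B)
    {s : Finset B} (hs : (s : Set B) = Set.range f) (φ : B → ℝ) :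
    𝔼 a, φ (f a) = 𝔼 b ∈ s, φ b := by
  classical
  have hmem : ∀ b, b ∈ s ↔ b ∈ Set.range f := fun b => by rw [← hs, Finset.mem_coe]
  have hmaps : ∀ a ∈ (Finset.univ : Finset A), f a ∈ s := fun a _ => (hmem _).2 ⟨a, rfl⟩
  obtain ⟨k, hk⟩ : ∃ k, ∀ b ∈ s, Finset.card {a | f a = b} = k :=
    ⟨_, fun b hb => AddMonoidHom.card_fiber_eq_of_mem_range f ((hmem b).1 hb) ⟨0, map_zero f⟩⟩
  have hcard : Fintype.card A = s.card * k := by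
    rw [← Finset.card_univ, Finset.card_eq_sum_card_fiberwise hmaps, Finset.sum_congr rfl hk,
      Finset.sum_const, smul_eq_mul]
  have hsum : ∑ a, φ (f a) = k * ∑ b ∈ s, φ b := by
    rw [← Finset.sum_fiberwise_of_maps_to hmaps, Finset.mul_sum]
    refine Finset.sum_congr rfl fun b hb => ?_
    rw [Finset.sum_congr rfl fun a ha => congrArg φ (Finset.mem_filter.1 ha).2, Finset.sum_const,
      hk b hb, nsmul_eq_mul]
  have hk0 : (k : ℝ) ≠ 0 := by
    have hpos : 0 < s.card * k := hcard ▸ Fintype.card_pos_iff.2 ⟨(0 : A)⟩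
    exact_mod_cast (pos_of_mul_pos_right hpos (Nat.zero_le _)).ne'
  rw [Fintype.expect_eq_sum_div_card, Finset.expect_eq_sum_div_card, hsum, hcard, Nat.cast_mul,
    mul_comm (s.card : ℝ), mul_div_mul_left _ _ hk0]

variable {m n κ K : Type*} [Fintype n] [DecidableEq n] [Fintype κ] [DecidableEq κ] [Field K]
  [Fintype K] [DecidableEq (m → K)]

theorem card_mulVec_eq_zero_mul_pow_le {F : Matrix m n K} {rows : κ → m} {cols : κ → n}
    (hdet : (F.submatrix rows cols).det ≠ 0) :
    Finset.card {v | F *ᵥ v = 0} * Fintype.card K ^ Fintype.card κ ≤ Fintype.card (n → K) := by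
  let extend (t : κ → K) : n → K := (1 : Matrix n n K).submatrix id cols *ᵥ t
  have hrows : ∀ v t, F *ᵥ v = 0 →
      F.submatrix rows id *ᵥ (v + extend t) = F.submatrix rows cols *ᵥ t := by
    intro v t hv
    have hzero : F.submatrix rows id *ᵥ v = 0 := funext fun j => congrFun hv (rows j)
    rw [mulVec_add, hzero, zero_add, mulVec_mulVec]
    exact congrArg (· *ᵥ t) (mul_submatrix_one (Equiv.refl n) cols (F.submatrix rows id))
  have hinj : Injective fun p : {v // F *ᵥ v = 0} × (κ → K) => p.1.1 + extend p.2 := by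
    rintro ⟨⟨v, hv⟩, t⟩ ⟨⟨v', hv'⟩, t'⟩ h
    obtain rfl : t = t' := mulVec_injective_of_isUnit ((isUnit_iff_isUnit_det _).2 hdet.isUnit) (by
      simpa only [hrows _ _ hv, hrows _ _ hv'] using congrArg (F.submatrix rows id *ᵥ ·) h)
    simpa using h
  simpa [Fintype.card_subtype] using Fintype.card_le_of_injective _ hinj

theorem expect_comp_kernelProj_mulVec {F : Matrix m n K} {rows : κ → m} {cols : κ → n}
    (hdet : (F.submatrix rows cols).det ≠ 0) (hF : F * kernelProj F rows cols = 0)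
    (φ : (n → K) → ℝ) :
    𝔼 v, φ (kernelProj F rows cols *ᵥ v) = 𝔼 v with F *ᵥ v = 0, φ v := by
  refine expect_comp_addMonoidHom (kernelProj F rows cols).mulVecLin.toAddMonoidHom ?_ φ
  ext v
  simp only [Finset.coe_filter, Finset.mem_univ, true_and, Set.mem_ofPred_eq, Set.mem_range]
  constructor
  · intro hv
    refine ⟨(F.submatrix rows cols).det⁻¹ • v, ?_⟩
    change kernelProj F rows cols *ᵥ _ = v
    rw [mulVec_smul, kernelProj_mulVec_of_eq_zero fun j => congrFun hv (rows j), smul_smul,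
      inv_mul_cancel₀ hdet, one_smul]
  · rintro ⟨v, rfl⟩
    change F *ᵥ (kernelProj F rows cols *ᵥ v) = 0
    rw [mulVec_mulVec, hF, zero_mulVec]

end KernelCounting

section Degree

variable {τ R : Type*} [CommRing R] {D : ℕ}

theorem totalDegree_det_le {κ : Type*} [Fintype κ] [DecidableEq κ]
    {A : Matrix κ κ (MvPolynomial τ R)} (hA : ∀ i j, (A i j).totalDegree ≤ D) :
    A.det.totalDegree ≤ Fintype.card κ * D := by
  rw [det_apply]
  refine totalDegree_finsetSum_le fun σ _ => (totalDegree_smul_le _ _).trans ?_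
  refine (totalDegree_finsetProd _ _).trans ?_
  exact (Finset.sum_le_card_nsmul _ _ D fun i _ => hA _ _).trans_eq (smul_eq_mul _ _)

theorem totalDegree_adjugate_apply_le {κ : Type*} [Fintype κ] [DecidableEq κ]
    {A : Matrix κ κ (MvPolynomial τ R)} (hA : ∀ i j, (A i j).totalDegree ≤ D) (i j : κ) :
    (A.adjugate i j).totalDegree ≤ Fintype.card κ * D := by
  rw [adjugate_apply]
  refine totalDegree_det_le fun k l => ?_
  rw [updateRow_apply]
  split_ifs
  · rw [Pi.single_apply]; split_ifs <;> simp
  · exact hA _ _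

theorem totalDegree_matrix_mul_apply_le {l m n : Type*} [Fintype m]
    {A : Matrix l m (MvPolynomial τ R)} {B : Matrix m n (MvPolynomial τ R)} {D' : ℕ}
    (hA : ∀ i j, (A i j).totalDegree ≤ D) (hB : ∀ i j, (B i j).totalDegree ≤ D') (i : l) (j : n) :
    ((A * B) i j).totalDegree ≤ D + D' := by
  rw [mul_apply]
  exact totalDegree_finsetSum_le fun k _ =>
    (totalDegree_mul _ _).trans (add_le_add (hA _ _) (hB _ _))

theorem totalDegree_kernelProj_apply_le {m n κ : Type*} [DecidableEq n] [Fintype κ]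
    [DecidableEq κ] {F : Matrix m n (MvPolynomial τ R)} (hF : ∀ i j, (F i j).totalDegree ≤ D)
    (rows : κ → m) (cols : κ → n) (i j : n) :
    (kernelProj F rows cols i j).totalDegree ≤ (Fintype.card κ + 1) * D := by
  have hone : ∀ i j, ((1 : Matrix n n (MvPolynomial τ R)) i j).totalDegree = 0 := fun i j => by
    rw [one_apply]; split_ifs <;> simp
  have hadj := totalDegree_matrix_mul_apply_le (fun i j => (hone i (cols j)).le)
    (totalDegree_adjugate_apply_le (A := F.submatrix rows cols) fun _ _ => hF _ _)
  rw [kernelProj, Matrix.sub_apply, Matrix.smul_apply, smul_eq_mul]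
  refine (totalDegree_sub _ _).trans (max_le ((totalDegree_mul _ _).trans ?_) ?_)
  · rw [hone, add_zero]
    exact (totalDegree_det_le fun _ _ => hF _ _).trans (Nat.mul_le_mul_right _ (Nat.le_succ _))
  · exact (totalDegree_matrix_mul_apply_le hadj (fun _ _ => hF _ _) i j).trans_eq (by ring)

end Degree

section Tensor

variable {ι : Type*} [Fintype ι] [DecidableEq ι] {N : ι → Type*} [∀ i, Fintype (N i)] {M : Type*}
  {K : Type*} [CommRing K]

/-- The multilinear map with coefficients `c`, over an arbitrary `K`-algebra. -/
noncomputable def tensorMap (c : (∀ i, N i) → M → K) (R : Type*) [CommRing R] [Algebra K R] :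
    MultilinearMap R (fun i => N i → R) (M → R) :=
  ∑ e, ((MultilinearMap.mkPiAlgebra R ι R).compLinearMap
    fun i => LinearMap.proj (e i)).smulRight fun h => algebraMap K R (c e h)

variable (c : (∀ i, N i) → M → K) {R R' : Type*} [CommRing R] [Algebra K R] [CommRing R']
  [Algebra K R']

theorem tensorMap_apply (x : ∀ i, N i → R) (h : M) :
    tensorMap c R x h = ∑ e, (∏ i, x i (e i)) * algebraMap K R (c e h) := by
  simp [tensorMap, Finset.sum_apply]

theorem map_tensorMap (f : R →ₐ[K] R') (x : ∀ i, N i → R) (h : M) :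
    f (tensorMap c R x h) = tensorMap c R' (fun i e => f (x i e)) h := by
  simp [tensorMap_apply, map_sum, map_mul, map_prod]

theorem totalDegree_tensorMap_le {τ : Type*} {D : ℕ} {x : ∀ i, N i → MvPolynomial τ K}
    (hx : ∀ i e, (x i e).totalDegree ≤ D) (h : M) :
    (tensorMap c (MvPolynomial τ K) x h).totalDegree ≤ Fintype.card ι * D := by
  rw [tensorMap_apply]
  refine totalDegree_finsetSum_le fun e _ => (totalDegree_mul _ _).trans ?_
  rw [algebraMap_eq, totalDegree_C, add_zero]
  refine (totalDegree_finsetProd _ _).trans ?_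
  exact (Finset.sum_le_card_nsmul _ _ D fun i _ => hx _ _).trans_eq (smul_eq_mul _ _)

variable [∀ i, DecidableEq (N i)]

/-- The matrix of `tensorMap c R` as a function of its `i`-th argument, the others being fixed. -/
noncomputable def slice (y : ∀ i, N i → R) (i : ι) : Matrix M (N i) R :=
  LinearMap.toMatrix' ((tensorMap c R).toLinearMap y i)

theorem slice_mulVec (y : ∀ i, N i → R) (i : ι) (v : N i → R) :
    slice c y i *ᵥ v = tensorMap c R (update y i v) :=
  LinearMap.toMatrix'_mulVec _ v

theorem slice_apply (y : ∀ i, N i → R) (i : ι) (h : M) (e : N i) :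
    slice c y i h e = tensorMap c R (update y i (Pi.single e 1)) h := by
  rw [slice, LinearMap.toMatrix'_apply]; rfl

theorem slice_map (f : R →ₐ[K] R') (y : ∀ i, N i → R) (i : ι) :
    (slice c y i).map f = slice c (fun j e => f (y j e)) i := by
  ext h e
  rw [map_apply, slice_apply, slice_apply, map_tensorMap]
  refine congrFun (congrArg _ ?_) h
  ext j e'
  by_cases hj : j = i
  · subst hj; simp [Pi.single_apply, apply_ite f]
  · simp [update_of_ne hj]

theorem slice_smul (y : ∀ i, N i → R) {s : ι → R} {i : ι} (hs : s i = 1) :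
    slice c (fun j => s j • y j) i = (∏ j, s j) • slice c y i := by
  ext h e
  rw [Matrix.smul_apply, slice_apply, slice_apply, ← Pi.smul_apply, ← MultilinearMap.map_smul_univ]
  refine congrFun (congrArg _ ?_) h
  ext j : 1
  by_cases hj : j = i
  · subst hj; simp [hs]
  · simp [update_of_ne hj]

theorem totalDegree_slice_apply_le {τ : Type*} {D : ℕ} {y : ∀ i, N i → MvPolynomial τ K}
    (hy : ∀ i e, (y i e).totalDegree ≤ D) (i : ι) (h : M) (e : N i) :
    (slice c y i h e).totalDegree ≤ Fintype.card ι * D := by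
  rw [slice_apply]
  refine totalDegree_tensorMap_le c (fun j e' => ?_) h
  by_cases hj : j = i
  · subst hj; rw [update_self, Pi.single_apply]; split_ifs <;> simp
  · rw [update_of_ne hj]; exact hy _ _

end Tensor

section Evaluation

variable {ι : Type u} {N : ι → Type v} {K : Type w} [CommRing K] {R : Type*} [CommRing R]
  [Algebra K R]

/-- Evaluation at a tuple of vectors of a polynomial in all their coordinates. -/
noncomputable def evalAt (w : ∀ i, N i → R) : MvPolynomial (Σ i, N i) K →ₐ[K] R :=
  aeval fun s => w s.1 s.2

/-- Evaluation at `w` of all the coordinates of a tuple of vectors of polynomials. -/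
noncomputable def evalPoint (w : ∀ i, N i → R) (b : ∀ i, N i → MvPolynomial (Σ i, N i) K) :
    ∀ i, N i → R :=
  fun i e => evalAt w (b i e)

theorem map_evalAt {R' : Type*} [CommRing R'] [Algebra K R'] (f : R →ₐ[K] R') (w : ∀ i, N i → R)
    (p : MvPolynomial (Σ i, N i) K) : f (evalAt w p) = evalAt (fun i e => f (w i e)) p := by
  have hcomp : f.comp (evalAt w) = evalAt fun i e => f (w i e) :=
    algHom_ext fun s => by simp [evalAt]
  exact DFunLike.congr_fun hcomp p

theorem evalAt_evalAt (w : ∀ i, N i → R) (b : ∀ i, N i → MvPolynomial (Σ i, N i) K)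
    (p : MvPolynomial (Σ i, N i) K) : evalAt w (evalAt b p) = evalAt (evalPoint w b) p :=
  map_evalAt (evalAt w) b p

variable (N K) in
/-- The tuple of vectors whose coordinates are independent variables. -/
noncomputable def genericPoint : ∀ i, N i → MvPolynomial (Σ i, N i) K := fun i e => X ⟨i, e⟩

@[simp] theorem evalPoint_genericPoint (w : ∀ i, N i → R) :
    evalPoint w (genericPoint N K) = w := by
  ext i e; simp [evalPoint, evalAt, genericPoint]

variable [DecidableEq ι]

theorem evalPoint_update (w : ∀ i, N i → R) (b : ∀ i, N i → MvPolynomial (Σ i, N i) K) (i : ι)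
    (v : N i → MvPolynomial (Σ i, N i) K) :
    evalPoint w (update b i v) = update (evalPoint w b) i fun e => evalAt w (v e) := by
  ext j e
  by_cases hj : j = i
  · subst hj; simp [evalPoint]
  · simp [evalPoint, update_of_ne hj]

/-- The hybrid of `w`, used on the coordinates in `L`, and of the constant tuple `a`. -/
def mix (a : ∀ i, N i → K) (L : Finset ι) (w : ∀ i, N i → R) : ∀ i, N i → R :=
  L.piecewise w fun i e => algebraMap K R (a i e)

theorem mix_congr (a : ∀ i, N i → K) {L : Finset ι} {w w' : ∀ i, N i → R}
    (h : ∀ i ∈ L, w i = w' i) : mix a L w = mix a L w' :=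
  L.piecewise_congr h fun _ _ => rfl

theorem mix_update_of_notMem (a : ∀ i, N i → K) {L : Finset ι} {i : ι} (hi : i ∉ L)
    (w : ∀ i, N i → R) (v : N i → R) : mix a L (update w i v) = mix a L w :=
  mix_congr a fun _ hj => update_of_ne (ne_of_mem_of_not_mem hj hi) _ _

theorem mix_insert (a : ∀ i, N i → K) (L : Finset ι) (i : ι) (w : ∀ i, N i → R) :
    mix a (insert i L) w = update (mix a L w) i (w i) :=
  Finset.piecewise_insert _ _ _ _

theorem mix_update_of_mix_eq {a : ∀ i, N i → K} {L : Finset ι} {b : ∀ i, N i → R}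
    (hb : mix a L b = b) (i : ι) (v : N i → R) :
    mix a (insert i L) (update b i v) = update b i v := by
  rw [mix_insert, update_self]
  ext j : 1
  by_cases hj : j = i
  · subst hj; simp
  · rw [update_of_ne hj, update_of_ne hj, ← congrFun hb j]
    by_cases hjL : j ∈ L <;> simp [mix, hjL, update_of_ne hj]

theorem mix_mix {a : ∀ i, N i → K} {L L' : Finset ι} (h : L ⊆ L') (w : ∀ i, N i → R) :
    mix a L (mix a L' w) = mix a L w :=
  mix_congr a fun _ hi => L'.piecewise_eq_of_mem _ _ (h hi)

theorem evalPoint_mix (a : ∀ i, N i → K) (L : Finset ι) (w : ∀ i, N i → R)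
    (b : ∀ i, N i → MvPolynomial (Σ i, N i) K) :
    evalPoint w (mix a L b) = mix a L (evalPoint w b) := by
  ext i e
  by_cases hi : i ∈ L <;> simp [evalPoint, mix, hi]

theorem evalAt_evalAt_mix (a : ∀ i, N i → K) (L : Finset ι) (w : ∀ i, N i → R)
    (p : MvPolynomial (Σ i, N i) K) :
    evalAt w (evalAt (mix a L (genericPoint N K)) p) = evalAt (mix a L w) p := by
  rw [evalAt_evalAt, evalPoint_mix, evalPoint_genericPoint]

theorem evalPoint_evalPoint_mix (a : ∀ i, N i → K) (L : Finset ι) (w : ∀ i, N i → R)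
    (b : ∀ i, N i → MvPolynomial (Σ i, N i) K) :
    evalPoint w (evalPoint (mix a L (genericPoint N K)) b) = evalPoint (mix a L w) b :=
  funext₂ fun _ _ => evalAt_evalAt_mix a L w _

end Evaluation

section GenericPath

variable {ι : Type u} [Fintype ι] [DecidableEq ι] {N : ι → Type v} [∀ i, Fintype (N i)]
  {M : Type*} {K : Type w} [Field K]

variable (N M K) in
/-- A polynomially parametrised point, together with the polynomial `pivot` and the equations which
allow to recover the parameters. The pair `(L, h)` stands for the equation `h` on the hybrid of the
unknown point, on the coordinates in `L`, and of a base point. -/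
structure ParamPoint where
  /-- The point, as a function of the parameters. -/
  point : ∀ i, N i → MvPolynomial (Σ i, N i) K
  /-- The polynomial whose values have to be units. -/
  pivot : MvPolynomial (Σ i, N i) K
  /-- The equations. -/
  eqs : Finset (Finset ι × M)

variable {c : (∀ i, N i) → M → K} {a : ∀ i, N i → K} {L : Finset ι} {P : ParamPoint N M K}

/-- `P` solves the system `tensorMap c _ = 0` as well as its own equations, and only depends on
the parameters in the directions `L`, being equal to `a` in the other directions. -/
structure ParamPoint.IsSolution (P : ParamPoint N M K) (c : (∀ i, N i) → M → K) (a : ∀ i, N i → K)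
    (L : Finset ι) : Prop where
  mix_point : mix a L P.point = P.point
  evalPoint_point : evalPoint (mix a L (genericPoint N K)) P.point = P.point
  evalAt_pivot : evalAt (mix a L (genericPoint N K)) P.pivot = P.pivot
  subset : ∀ p ∈ P.eqs, p.1 ⊆ L
  tensorMap_point : tensorMap c _ P.point = 0
  tensorMap_mix : ∀ p ∈ P.eqs, tensorMap c _ (mix a p.1 P.point) p.2 = 0

namespace ParamPoint.IsSolution

variable (hP : P.IsSolution c a L)
include hP

theorem evalPoint_mix_of_subset {L' : Finset ι} (hL : L ⊆ L') :
    evalPoint (mix a L' (genericPoint N K)) P.point = P.point := by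
  conv_lhs => rw [← hP.evalPoint_point]
  rw [evalPoint_evalPoint_mix, mix_mix hL, hP.evalPoint_point]

theorem evalAt_mix_of_subset {L' : Finset ι} (hL : L ⊆ L') :
    evalAt (mix a L' (genericPoint N K)) P.pivot = P.pivot := by
  conv_lhs => rw [← hP.evalAt_pivot]
  rw [evalAt_evalAt_mix, mix_mix hL, hP.evalAt_pivot]

theorem evalPoint_update_of_notMem {i : ι} (hi : i ∉ L) (u : ∀ i, N i → K) (v : N i → K) :
    evalPoint (update u i v) P.point = evalPoint u P.point := by
  rw [← hP.evalPoint_point, evalPoint_evalPoint_mix, evalPoint_evalPoint_mix,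
    mix_update_of_notMem a hi]

end ParamPoint.IsSolution

variable [∀ i, DecidableEq (N i)]

theorem slice_evalPoint (c : (∀ i, N i) → M → K) {R : Type*} [CommRing R] [Algebra K R]
    (w : ∀ i, N i → R) (b : ∀ i, N i → MvPolynomial (Σ i, N i) K) (i : ι) :
    slice c (evalPoint w b) i = (slice c b i).map (evalAt w).toRingHom :=
  (slice_map c (evalAt w) b i).symm

theorem evalAt_det_slice (c : (∀ i, N i) → M → K) {R : Type*} [CommRing R] [Algebra K R]
    (w : ∀ i, N i → R) (b : ∀ i, N i → MvPolynomial (Σ i, N i) K) (i : ι) {ρ : ℕ}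
    (rows : Fin ρ → M) (cols : Fin ρ → N i) :
    evalAt w ((slice c b i).submatrix rows cols).det =
      ((slice c (evalPoint w b) i).submatrix rows cols).det := by
  rw [slice_evalPoint, submatrix_map]
  exact (evalAt w).toRingHom.map_det _

variable [DecidableEq M]

/-- The parametrised point `P`, which involves the coordinates in `L`, with the coordinate `i`
replaced by the projection of a new generic vector to the kernel of the slice through `P` in
direction `i`. -/
noncomputable def ParamPoint.advance (P : ParamPoint N M K) (c : (∀ i, N i) → M → K)
    (a : ∀ i, N i → K) (L : Finset ι) (i : ι) {ρ : ℕ} (rows : Fin ρ → M) (cols : Fin ρ → N i) :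
    ParamPoint N M K where
  point := update P.point i (kernelProj (slice c P.point i) rows cols *ᵥ genericPoint N K i)
  pivot := P.pivot * ((slice c (mix a L (genericPoint N K)) i).submatrix rows cols).det
  eqs := P.eqs ∪ Finset.univ.image fun j => (insert i L, rows j)

variable {i : ι} {ρ : ℕ} {rows : Fin ρ → M} {cols : Fin ρ → N i}

theorem evalPoint_advance {R : Type*} [CommRing R] [Algebra K R] (w : ∀ i, N i → R) :
    evalPoint w (P.advance c a L i rows cols).point = update (evalPoint w P.point) i
      (kernelProj (slice c (evalPoint w P.point) i) rows cols *ᵥ w i) := by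
  rw [ParamPoint.advance, evalPoint_update, slice_evalPoint, ← kernelProj_map]
  congr 1
  ext e
  refine (RingHom.map_mulVec (evalAt w).toRingHom _ _ e).trans (congrFun ?_ e)
  congr 1
  exact congrFun (evalPoint_genericPoint w) i

namespace ParamPoint.IsSolution

variable (hP : P.IsSolution c a L)
include hP

theorem evalAt_pivot_advance (hi : i ∉ L) :
    evalAt (P.advance c a L i rows cols).point (P.advance c a L i rows cols).pivot =
      evalAt P.point P.pivot * ((slice c P.point i).submatrix rows cols).det := by
  have hmix : mix a L (P.advance c a L i rows cols).point = P.point :=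
    (mix_update_of_notMem a hi _ _).trans hP.mix_point
  have hpivot : evalAt (P.advance c a L i rows cols).point P.pivot = evalAt P.point P.pivot := by
    rw [← hP.evalAt_pivot, evalAt_evalAt_mix, hmix, ← hP.mix_point, evalAt_evalAt_mix,
      mix_mix subset_rfl]
  rw [ParamPoint.advance, map_mul, evalAt_det_slice, evalPoint_mix, evalPoint_genericPoint]
  exact congrArg₂ (fun p b => p * ((slice c b i).submatrix rows cols).det) hpivot hmix

theorem advance (hi : i ∉ L)
    (hker : slice c P.point i * kernelProj (slice c P.point i) rows cols = 0) :
    (P.advance c a L i rows cols).IsSolution c a (insert i L) where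
  mix_point := mix_update_of_mix_eq hP.mix_point i _
  evalPoint_point := by
    rw [evalPoint_advance, hP.evalPoint_mix_of_subset (Finset.subset_insert i L), mix_insert,
      update_self]
    rfl
  evalAt_pivot := by
    rw [ParamPoint.advance, map_mul, hP.evalAt_mix_of_subset (Finset.subset_insert i L),
      evalAt_det_slice, evalPoint_mix, evalPoint_genericPoint, mix_mix (Finset.subset_insert i L)]
  subset p hp := by
    rcases Finset.mem_union.1 hp with hp | hp
    · exact (hP.subset p hp).trans (Finset.subset_insert i L)
    · obtain ⟨j, -, rfl⟩ := Finset.mem_image.1 hp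
      exact subset_rfl
  tensorMap_point := by
    rw [ParamPoint.advance, ← slice_mulVec, mulVec_mulVec, hker, zero_mulVec]
  tensorMap_mix p hp := by
    rcases Finset.mem_union.1 hp with hp | hp
    · have hip : i ∉ p.1 := fun h => hi (hP.subset p hp h)
      rw [ParamPoint.advance, mix_update_of_notMem a hip, hP.tensorMap_mix p hp]
    · obtain ⟨j, -, rfl⟩ := Finset.mem_image.1 hp
      rw [ParamPoint.advance, mix_update_of_mix_eq hP.mix_point, ← slice_mulVec, mulVec_mulVec,
        hker, zero_mulVec, Pi.zero_apply]

end ParamPoint.IsSolution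

/-- Any point `w` that satisfies the equations of `P` and makes its pivot invertible agrees in the
directions `L`, up to units, with the value of `P` at the parameter `w`. -/
def ParamPoint.Recovers (P : ParamPoint N M K) (c : (∀ i, N i) → M → K) (a : ∀ i, N i → K)
    (L : Finset ι) : Prop :=
  ∀ (R : Type max u v w) [CommRing R] [Algebra K R] (w : ∀ i, N i → R),
    (∀ p ∈ P.eqs, tensorMap c R (mix a p.1 w) p.2 = 0) → IsUnit (evalAt w P.pivot) →
      ∀ i ∈ L, ∃ ε : R, IsUnit ε ∧ evalPoint w P.point i = ε • w i

theorem ParamPoint.Recovers.advance (hrec : P.Recovers c a L) (hP : P.IsSolution c a L)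
    (hi : i ∉ L) : (P.advance c a L i rows cols).Recovers c a (insert i L) := by
  intro R _ _ w hw hunit
  rw [ParamPoint.advance, map_mul, evalAt_det_slice, evalPoint_mix, evalPoint_genericPoint] at hunit
  choose! ε hε hpoint using
    hrec R w (fun p hp => hw p (Finset.mem_union_left _ hp)) (isUnit_of_mul_isUnit_left hunit)
  let s : ι → R := fun j => if j ∈ L then ε j else 1
  have hsi : s i = 1 := if_neg hi
  have hs : IsUnit (∏ j, s j) := by
    refine IsUnit.prod_univ_iff.2 fun j => ?_
    by_cases hj : j ∈ L <;> simp [s, hj, hε]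
  have hscale : evalPoint w P.point = fun j => s j • mix a L w j := by
    rw [← hP.mix_point, evalPoint_mix]
    ext j : 1
    by_cases hj : j ∈ L <;> simp [mix, s, hj, hpoint]
  have hslice : slice c (evalPoint w P.point) i = (∏ j, s j) • slice c (mix a L w) i := by
    rw [hscale, slice_smul c _ hsi]
  have hdet : IsUnit ((slice c (evalPoint w P.point) i).submatrix rows cols).det := by
    rw [hslice, submatrix_smul, Pi.smul_apply, Pi.smul_apply, det_smul]
    exact (hs.pow _).mul (isUnit_of_mul_isUnit_right hunit)
  have hrows : ∀ j, (slice c (evalPoint w P.point) i *ᵥ w i) (rows j) = 0 := by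
    intro j
    have hj := hw (insert i L, rows j)
      (Finset.mem_union_right _ (Finset.mem_image_of_mem _ (Finset.mem_univ j)))
    rw [hslice, smul_mulVec, Pi.smul_apply, slice_mulVec, ← mix_insert, hj, smul_zero]
  intro j hj
  rw [evalPoint_advance]
  rcases Finset.mem_insert.1 hj with rfl | hj
  · exact ⟨_, hdet, by rw [update_self, kernelProj_mulVec_of_eq_zero hrows]⟩
  · exact ⟨ε j, hε j hj, by rw [update_of_ne (ne_of_mem_of_not_mem hj hi), hpoint j hj]⟩

end GenericPath

section GenericPathExistence

variable {ι : Type u} [Fintype ι] [DecidableEq ι] {N : ι → Type v} [∀ i, Fintype (N i)]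
  [∀ i, DecidableEq (N i)] {M : Type*}

section Degree

variable {K : Type w} [Field K] {c : (∀ i, N i) → M → K} {a : ∀ i, N i → K} {L : Finset ι}
  {P : ParamPoint N M K} {i : ι} {ρ d D : ℕ} {rows : Fin ρ → M} {cols : Fin ρ → N i}

theorem totalDegree_advance_point_le [DecidableEq M]
    (hD : ∀ j e, (P.point j e).totalDegree ≤ D) (hρ : ρ ≤ d) (hpos : 1 ≤ D) (j : ι) (e : N j) :
    ((P.advance c a L i rows cols).point j e).totalDegree ≤ Fintype.card ι * (d + 2) * D := by
  have hι : 1 ≤ Fintype.card ι := Fintype.card_pos_iff.2 ⟨i⟩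
  simp only [ParamPoint.advance]
  rcases eq_or_ne j i with rfl | hj
  · have hproj := totalDegree_kernelProj_apply_le (totalDegree_slice_apply_le c hD j) rows cols e
    rw [update_self, mulVec, dotProduct]
    refine totalDegree_finsetSum_le fun e' _ => (totalDegree_mul _ _).trans ?_
    rw [genericPoint, totalDegree_X]
    have h := hproj e'
    rw [Fintype.card_fin] at h
    nlinarith [Nat.mul_le_mul hι hpos, Nat.mul_le_mul_right (Fintype.card ι * D) hρ]
  · rw [update_of_ne hj]
    exact (hD j e).trans (Nat.le_mul_of_pos_left D (by positivity))

theorem totalDegree_det_slice_le (hD : ∀ j e, (P.point j e).totalDegree ≤ D) :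
    ((slice c P.point i).submatrix rows cols).det.totalDegree ≤ ρ * (Fintype.card ι * D) :=
  (totalDegree_det_le fun _ _ => totalDegree_slice_apply_le c hD i _ _).trans_eq
    (by rw [Fintype.card_fin])

theorem totalDegree_mul_det_slice_le {p : MvPolynomial (Σ i, N i) K} (hp : p.totalDegree ≤ D)
    (hD : ∀ j e, (P.point j e).totalDegree ≤ D) (hρ : ρ ≤ d + 1) :
    (p * ((slice c P.point i).submatrix rows cols).det).totalDegree ≤
      Fintype.card ι * (d + 2) * D := by
  have hι : 1 ≤ Fintype.card ι := Fintype.card_pos_iff.2 ⟨i⟩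
  have hdet : _ ≤ ρ * (Fintype.card ι * D) :=
    totalDegree_det_slice_le (c := c) (i := i) (rows := rows) (cols := cols) hD
  refine (totalDegree_mul _ _).trans ?_
  nlinarith [Nat.mul_le_mul_right (Fintype.card ι * D) hρ, Nat.mul_le_mul_right D hι]

end Degree

variable {K : Type w} [Field K] [Fintype K] [DecidableEq K]

theorem card_le_two_mul_card_evalAt_ne_zero {p : MvPolynomial (Σ i, N i) K} (hp : p ≠ 0)
    (hdeg : 2 * p.totalDegree ≤ Fintype.card K) :
    Fintype.card (∀ i, N i → K) ≤ 2 * Finset.card {u : ∀ i, N i → K | evalAt u p ≠ 0} := by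
  let e : ((Σ i, N i) → K) ≃ ∀ i, N i → K := Equiv.piCurry fun _ _ => K
  have hcard : Finset.card {u : (Σ i, N i) → K | eval u p ≠ 0} =
      Finset.card {u : ∀ i, N i → K | evalAt u p ≠ 0} :=
    Finset.card_equiv e fun u => by
      simp only [Finset.mem_filter, Finset.mem_univ, true_and]
      rfl
  rw [← hcard, ← Fintype.card_congr e]
  exact card_le_two_mul_card_eval_ne_zero hp hdeg

variable [DecidableEq (M → K)] {c : (∀ i, N i) → M → K} {a : ∀ i, N i → K} {l : List ι} {d : ℕ}
  {P : ParamPoint N M K}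

/-- For uniformly random parameters, `P` is the result of the random walk along `l` started at `a`,
up to the event that the pivot vanishes. -/
def ParamPoint.Samples (P : ParamPoint N M K) (c : (∀ i, N i) → M → K) (a : ∀ i, N i → K)
    (l : List ι) : Prop :=
  ∀ φ : (∀ i, N i → K) → ℝ, 0 ≤ φ →
    ∑ u : ∀ i, N i → K,
        (if evalAt (evalPoint u P.point) P.pivot ≠ 0 then φ (evalPoint u P.point) else 0) ≤
      Fintype.card (∀ i, N i → K) * walk (tensorMap c K) l φ a

/-- `P` is a generic point of the random walk along `l` started at `a`, with at most `d` equations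
for each step. -/
structure ParamPoint.IsGeneric (P : ParamPoint N M K) (c : (∀ i, N i) → M → K)
    (a : ∀ i, N i → K) (l : List ι) (d : ℕ) : Prop where
  isSolution : P.IsSolution c a l.toFinset
  recovers : P.Recovers c a l.toFinset
  samples : P.Samples c a l
  card_eqs : P.eqs.card ≤ d * l.length
  pivot_ne_zero : evalAt P.point P.pivot ≠ 0
  totalDegree_point i e : (P.point i e).totalDegree ≤ (Fintype.card ι * (d + 2)) ^ l.length
  totalDegree_pivot : (evalAt P.point P.pivot).totalDegree ≤ (Fintype.card ι * (d + 2)) ^ l.length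

theorem sum_ite_det_slice_ne_zero_le {b : ∀ i, N i → K} {i : ι} {ρ : ℕ} {rows : Fin ρ → M}
    {cols : Fin ρ → N i} (hker : slice c b i * kernelProj (slice c b i) rows cols = 0)
    {φ : (∀ i, N i → K) → ℝ} (hφ : 0 ≤ φ) :
    ∑ v, (if ((slice c b i).submatrix rows cols).det ≠ 0
        then φ (update b i (kernelProj (slice c b i) rows cols *ᵥ v)) else 0) ≤
      Fintype.card (N i → K) * resample (tensorMap c K) i φ b := by
  by_cases hdet : ((slice c b i).submatrix rows cols).det = 0
  · simp only [hdet, ne_eq, not_true_eq_false, if_false, Finset.sum_const_zero]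
    exact mul_nonneg (Nat.cast_nonneg _) (resample_nonneg hφ b)
  · simp only [ne_eq, hdet, not_false_eq_true, if_true]
    rw [← Fintype.card_mul_expect,
      expect_comp_kernelProj_mulVec hdet hker fun v => φ (update b i v)]
    simp only [resample, sliceZeros, slice_mulVec, le_refl]

section Advance

variable [DecidableEq M] {i : ι} {ρ : ℕ} {rows : Fin ρ → M} {cols : Fin ρ → N i}

theorem ParamPoint.IsSolution.sum_advance_le (hP : P.IsSolution c a l.toFinset)
    (hi : i ∉ l.toFinset)
    (hker : slice c P.point i * kernelProj (slice c P.point i) rows cols = 0)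
    {φ : (∀ i, N i → K) → ℝ} (hφ : 0 ≤ φ) (u : ∀ i, N i → K) {P' : ParamPoint N M K}
    (hP' : P' = P.advance c a l.toFinset i rows cols) :
    ∑ v, (if evalAt (evalPoint (update u i v) P'.point) P'.pivot ≠ 0
        then φ (evalPoint (update u i v) P'.point) else 0) ≤
      Fintype.card (N i → K) * (if evalAt (evalPoint u P.point) P.pivot ≠ 0
        then resample (tensorMap c K) i φ (evalPoint u P.point) else 0) := by
  subst hP'
  set b := evalPoint u P.point
  have hb : ∀ v, evalPoint (update u i v) P.point = b := hP.evalPoint_update_of_notMem hi u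
  have hpoint : ∀ v, evalPoint (update u i v) (P.advance c a l.toFinset i rows cols).point =
      update b i (kernelProj (slice c b i) rows cols *ᵥ v) := fun v => by
    rw [evalPoint_advance, hb, update_self]
  have hpivot : ∀ v, evalAt (update b i (kernelProj (slice c b i) rows cols *ᵥ v))
        (P.advance c a l.toFinset i rows cols).pivot =
      evalAt b P.pivot * ((slice c b i).submatrix rows cols).det := fun v => by
    rw [← hpoint, ← evalAt_evalAt, hP.evalAt_pivot_advance hi, map_mul, evalAt_det_slice,
      evalAt_evalAt, hb]
  have hkerb : slice c b i * kernelProj (slice c b i) rows cols = 0 := by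
    rw [slice_evalPoint, ← kernelProj_map, ← Matrix.map_mul, hker, Matrix.map_zero _ (map_zero _)]
  simp only [hpoint, hpivot]
  by_cases hb0 : evalAt b P.pivot = 0
  · simp [hb0]
  · simpa [hb0] using sum_ite_det_slice_ne_zero_le hkerb hφ

theorem ParamPoint.Samples.advance (hS : P.Samples c a l) (hP : P.IsSolution c a l.toFinset)
    (hi : i ∉ l.toFinset)
    (hker : slice c P.point i * kernelProj (slice c P.point i) rows cols = 0) :
    (P.advance c a l.toFinset i rows cols).Samples c a (i :: l) := by
  intro φ hφ
  have hcard : (0 : ℝ) < Fintype.card (N i → K) := by exact_mod_cast Fintype.card_pos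
  apply le_of_mul_le_mul_left _ hcard
  rw [← nsmul_eq_mul, ← sum_sum_update (Y := fun i => N i → K) i]
  refine (Finset.sum_le_sum fun u _ => hP.sum_advance_le hi hker hφ u rfl).trans ?_
  rw [← Finset.mul_sum]
  exact mul_le_mul_of_nonneg_left (hS _ (resample_nonneg hφ)) hcard.le

end Advance

/-- If the minor were nonzero, the slice through at least half of the points of the walk would be
thin. -/
theorem ParamPoint.IsGeneric.det_slice_eq_zero (hP : P.IsGeneric c a l d) {i : ι}
    (hq : 2 * (Fintype.card ι * (d + 2)) ^ (l.length + 1) ≤ Fintype.card K)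
    (hthin : walk (tensorMap c K) l (thinSlice (tensorMap c K) (Fintype.card K ^ (d + 1)) i) a
      < 1 / 2) (rows : Fin (d + 1) → M) (cols : Fin (d + 1) → N i) :
    ((slice c P.point i).submatrix rows cols).det = 0 := by
  by_contra hdet
  set φ := thinSlice (tensorMap c K) (Fintype.card K ^ (d + 1)) i
  have hφ : 0 ≤ φ := thinSlice_nonneg _ _ i
  set p := evalAt P.point P.pivot * ((slice c P.point i).submatrix rows cols).det with hp
  have hp0 : p ≠ 0 := mul_ne_zero hP.pivot_ne_zero hdet
  have hdeg : 2 * p.totalDegree ≤ Fintype.card K := by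
    refine (Nat.mul_le_mul_left 2 ?_).trans hq
    rw [pow_succ']
    exact totalDegree_mul_det_slice_le hP.totalDegree_pivot hP.totalDegree_point le_rfl
  have hterm : ∀ u : ∀ i, N i → K, (if evalAt u p ≠ 0 then (1 : ℝ) else 0) ≤
      if evalAt (evalPoint u P.point) P.pivot ≠ 0 then φ (evalPoint u P.point) else 0 := by
    intro u
    rw [hp, map_mul, evalAt_evalAt, evalAt_det_slice]
    have hthin : ((slice c (evalPoint u P.point) i).submatrix rows cols).det ≠ 0 →
        φ (evalPoint u P.point) = 1 := fun h => if_pos <| by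
      simpa [sliceZeros, slice_mulVec] using card_mulVec_eq_zero_mul_pow_le h
    split_ifs with h1 h2 h2
    · exact (hthin (right_ne_zero_of_mul h1)).ge
    · exact absurd (left_ne_zero_of_mul h1) h2
    · exact hφ _
    · exact le_rfl
  have hhalf : (Fintype.card (∀ i, N i → K) : ℝ) ≤
      2 * ∑ u : ∀ i, N i → K, (if evalAt u p ≠ 0 then (1 : ℝ) else 0) := by
    rw [Finset.sum_boole]
    exact_mod_cast card_le_two_mul_card_evalAt_ne_zero hp0 hdeg
  have hupper := (Finset.sum_le_sum fun u _ => hterm u).trans (hP.samples φ hφ)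
  have hpos : (0 : ℝ) < Fintype.card (∀ i, N i → K) := by exact_mod_cast Fintype.card_pos
  nlinarith

theorem isGeneric_nil (ha : tensorMap c K a = 0) (d : ℕ) :
    (⟨fun i e => C (a i e), 1, ∅⟩ : ParamPoint N M K).IsGeneric c a [] d where
  isSolution :=
    { mix_point := Finset.piecewise_empty _ _
      evalPoint_point := funext₂ fun i e => by simp [evalPoint, evalAt, algebraMap_eq]
      evalAt_pivot := map_one _
      subset := by simp
      tensorMap_point := by
        ext1 h
        simpa [ha] using (map_tensorMap c (Algebra.ofId K (MvPolynomial (Σ i, N i) K)) a h).symm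
      tensorMap_mix := by simp }
  recovers _ _ _ _ _ _ _ hi := absurd hi (Finset.notMem_empty _)
  samples φ _ := by
    have hpoint : ∀ u : ∀ i, N i → K, evalPoint u (fun i e => C (a i e)) = a := fun u => by
      ext i e; simp [evalPoint, evalAt]
    simp [hpoint, walk]
  card_eqs := by simp
  pivot_ne_zero := by simp
  totalDegree_point := by simp
  totalDegree_pivot := by simp

theorem ParamPoint.IsGeneric.exists_cons (hP : P.IsGeneric c a l d) {i : ι}
    (hi : i ∉ l) (hq : 2 * (Fintype.card ι * (d + 2)) ^ (l.length + 1) ≤ Fintype.card K)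
    (hthin : walk (tensorMap c K) l (thinSlice (tensorMap c K) (Fintype.card K ^ (d + 1)) i) a
      < 1 / 2) : ∃ P' : ParamPoint N M K, P'.IsGeneric c a (i :: l) d := by
  classical
  obtain ⟨ρ, hρ, rows, cols, hdet, hker⟩ :=
    exists_maximal_minor (slice c P.point i) (hP.det_slice_eq_zero hq hthin)
  have hi' : i ∉ l.toFinset := by rwa [List.mem_toFinset]
  have hpos : 1 ≤ (Fintype.card ι * (d + 2)) ^ l.length :=
    Nat.one_le_pow _ _ (Nat.mul_pos (Fintype.card_pos_iff.2 ⟨i⟩) (Nat.succ_pos _))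
  have hpivot := hP.isSolution.evalAt_pivot_advance (rows := rows) (cols := cols) hi'
  refine ⟨P.advance c a l.toFinset i rows cols, ?_, ?_, hP.samples.advance hP.isSolution hi' hker,
    ?_, ?_, ?_, ?_⟩
  · rw [List.toFinset_cons]
    exact hP.isSolution.advance hi' hker
  · rw [List.toFinset_cons]
    exact hP.recovers.advance hP.isSolution hi'
  · rw [List.length_cons, mul_add, mul_one]
    refine (Finset.card_union_le _ _).trans (add_le_add hP.card_eqs ?_)
    exact Finset.card_image_le.trans ((Finset.card_fin ρ).trans_le hρ)
  · rw [hpivot]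
    exact mul_ne_zero hP.pivot_ne_zero hdet
  · rw [List.length_cons, pow_succ']
    exact totalDegree_advance_point_le hP.totalDegree_point hρ hpos
  · rw [List.length_cons, pow_succ', hpivot]
    exact totalDegree_mul_det_slice_le hP.totalDegree_pivot hP.totalDegree_point
      (hρ.trans (Nat.le_succ d))

theorem exists_isGeneric (ha : tensorMap c K a = 0) (hl : l.Nodup)
    (hq : 2 * (Fintype.card ι * (d + 2)) ^ l.length ≤ Fintype.card K)
    (hthin : thinness (tensorMap c K) (Fintype.card K ^ (d + 1)) l a < 1 / 2) :
    ∃ P : ParamPoint N M K, P.IsGeneric c a l d := by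
  induction l with
  | nil => exact ⟨_, isGeneric_nil ha d⟩
  | cons i l ih =>
    rw [List.nodup_cons] at hl
    rw [thinness] at hthin
    have hwalk : 0 ≤ walk (tensorMap c K) l
        (thinSlice (tensorMap c K) (Fintype.card K ^ (d + 1)) i) a :=
      walk_nonneg (thinSlice_nonneg _ _ i) a
    have hthinness : 0 ≤ thinness (tensorMap c K) (Fintype.card K ^ (d + 1)) l a :=
      thinness_nonneg _ _ l a
    have hpos : 0 < Fintype.card ι * (d + 2) :=
      Nat.mul_pos (Fintype.card_pos_iff.2 ⟨i⟩) (Nat.succ_pos _)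
    obtain ⟨P, hP⟩ := ih hl.2
      ((Nat.mul_le_mul_left 2 (Nat.pow_le_pow_right hpos (Nat.le_succ _))).trans hq) (by linarith)
    exact hP.exists_cons hl.1 hq (by linarith)

end GenericPathExistence

section Multilinear

variable {ι : Type*} [DecidableEq ι] {R : Type*} {G : ι → Type*} {H : Type*}

/-- A function of the vectors `x i` which depends on `x i` only for `i ∈ J`, and is linear in each
of these. -/
structure IsMultilinearOn (R : Type*) [Semiring R] [∀ i, AddCommMonoid (G i)]
    [∀ i, Module R (G i)] [AddCommMonoid H] [Module R H] (J : Finset ι) (f : (∀ i, G i) → H) :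
    Prop where
  dependsOn : DependsOn f J
  map_update_add : ∀ i ∈ J, ∀ x v w, f (update x i (v + w)) = f (update x i v) + f (update x i w)
  map_update_smul : ∀ i ∈ J, ∀ x (t : R) v, f (update x i (t • v)) = t • f (update x i v)

namespace IsMultilinearOn

section Semiring

variable [Semiring R] [∀ i, AddCommMonoid (G i)] [∀ i, Module R (G i)] [AddCommMonoid H]
  [Module R H] {J : Finset ι} {f : (∀ i, G i) → H}

theorem linearMap_comp {H' : Type*} [AddCommMonoid H'] [Module R H'] (hf : IsMultilinearOn R J f)
    (L : H →ₗ[R] H') : IsMultilinearOn R J fun x => L (f x) where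
  dependsOn _ _ h := congrArg L (hf.dependsOn h)
  map_update_add i hi x v w := by rw [hf.map_update_add i hi, map_add]
  map_update_smul i hi x t v := by rw [hf.map_update_smul i hi, map_smul]

theorem comp {ι' : Type*} [DecidableEq ι'] {G' : ι' → Type*} [∀ i, AddCommMonoid (G' i)]
    [∀ i, Module R (G' i)] (hf : IsMultilinearOn R J f) {J' : Finset ι'}
    {Φ : (∀ i, G' i) → ∀ i, G i} (hdep : ∀ j ∈ J, DependsOn (fun x => Φ x j) J')
    (hlin : ∀ i ∈ J', ∃ j ∈ J, ∃ φ : G' i →ₗ[R] G j,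
      ∀ x v, Φ (update x i v) = update (Φ x) j (φ v)) :
    IsMultilinearOn R J' fun x => f (Φ x) where
  dependsOn _ _ h := hf.dependsOn fun j hj => hdep j hj h
  map_update_add i hi x v w := by
    obtain ⟨j, hj, φ, hφ⟩ := hlin i hi
    rw [hφ, hφ, hφ, map_add, hf.map_update_add j hj]
  map_update_smul i hi x t v := by
    obtain ⟨j, hj, φ, hφ⟩ := hlin i hi
    rw [hφ, hφ, map_smul, hf.map_update_smul j hj]

theorem comp_linearMap {G' : ι → Type*} [∀ i, AddCommMonoid (G' i)] [∀ i, Module R (G' i)]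
    (hf : IsMultilinearOn R J f) (φ : ∀ i, G' i →ₗ[R] G i) :
    IsMultilinearOn R J fun x => f fun i => φ i (x i) :=
  hf.comp (fun j hj _ _ h => congrArg (φ j) (h j hj)) fun i hi =>
    ⟨i, hi, φ i, fun x v => funext fun j => apply_update (fun i => φ i) x i v j⟩

theorem sum {κ : Type*} {s : Finset κ} {f : κ → (∀ i, G i) → H}
    (hf : ∀ k ∈ s, IsMultilinearOn R J (f k)) : IsMultilinearOn R J fun x => ∑ k ∈ s, f k x where
  dependsOn _ _ h := Finset.sum_congr rfl fun k hk => (hf k hk).dependsOn h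
  map_update_add i hi x v w := by
    rw [← Finset.sum_add_distrib]
    exact Finset.sum_congr rfl fun k hk => (hf k hk).map_update_add i hi x v w
  map_update_smul i hi x t v := by
    rw [Finset.smul_sum]
    exact Finset.sum_congr rfl fun k hk => (hf k hk).map_update_smul i hi x t v

theorem pi {κ : Type*} {f : (∀ i, G i) → κ → H} (hf : ∀ k, IsMultilinearOn R J fun x => f x k) :
    IsMultilinearOn R J f where
  dependsOn _ _ h := funext fun k => (hf k).dependsOn h
  map_update_add i hi x v w := funext fun k => (hf k).map_update_add i hi x v w
  map_update_smul i hi x t v := funext fun k => (hf k).map_update_smul i hi x t v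

theorem restrictScalars {S : Type*} [Semiring S] [SMul S R] [∀ i, Module S (G i)]
    [∀ i, IsScalarTower S R (G i)] [Module S H] [IsScalarTower S R H]
    (hf : IsMultilinearOn R J f) : IsMultilinearOn S J f where
  dependsOn := hf.dependsOn
  map_update_add := hf.map_update_add
  map_update_smul i hi x t v := by
    rw [← smul_one_smul R t v, hf.map_update_smul i hi, smul_one_smul]

end Semiring

end IsMultilinearOn

theorem isMultilinearOn_prod [CommSemiring R] [∀ i, AddCommMonoid (G i)] [∀ i, Module R (G i)]
    [Fintype ι] {J : Finset ι} {f : ∀ i, G i → R} (hlin : ∀ i ∈ J, IsLinearMap R (f i))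
    (hconst : ∀ i ∉ J, ∀ v w, f i v = f i w) : IsMultilinearOn R J fun x => ∏ i, f i (x i) := by
  have hupdate : ∀ (x : ∀ i, G i) i v, ∏ j, f j (update x i v j) =
      f i v * ∏ j ∈ Finset.univ.erase i, f j (x j) := fun x i v => by
    rw [← Finset.mul_prod_erase _ _ (Finset.mem_univ i), update_self]
    refine congrArg _ (Finset.prod_congr rfl fun j hj => ?_)
    rw [update_of_ne (Finset.ne_of_mem_erase hj)]
  refine ⟨fun x y h => Finset.prod_congr rfl fun i _ => ?_, fun i hi x v w => ?_,
    fun i hi x t v => ?_⟩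
  · by_cases hi : i ∈ J
    · rw [h i hi]
    · exact hconst i hi _ _
  · rw [hupdate, hupdate, hupdate, (hlin i hi).map_add, add_mul]
  · rw [hupdate, hupdate, (hlin i hi).map_smul, smul_mul_assoc]

end Multilinear

section WeightedHomogeneous

variable {ι : Type*} [DecidableEq ι] {N : ι → Type*}

variable (N) in
/-- The multidegree of a variable, an element of `ℕ ^ ι` counting separately the degrees in the
coordinates of each vector. -/
def varWeight (s : Σ i, N i) : ι → ℕ := Pi.single s.1 1

/-- The multidegree of a function which is multilinear on `S`. -/
def multidegree (S : Finset ι) : ι → ℕ := ∑ i ∈ S, Pi.single i 1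

theorem multidegree_apply (S : Finset ι) (i : ι) : multidegree S i = if i ∈ S then 1 else 0 := by
  simp [multidegree, Finset.sum_apply, Pi.single_apply]

theorem multidegree_injective : Injective (multidegree : Finset ι → ι → ℕ) := fun S T h => by
  ext i
  have hi := congrFun h i
  rw [multidegree_apply, multidegree_apply] at hi
  by_cases hS : i ∈ S <;> by_cases hT : i ∈ T <;> simp_all

theorem weight_varWeight (d : (Σ i, N i) →₀ ℕ) (i : ι) :
    Finsupp.weight (varWeight N) d i = (d.split i).degree := by
  induction d using Finsupp.induction_linear with
  | zero =>
    have hsplit : (0 : (Σ i, N i) →₀ ℕ).split i = 0 := by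
      ext; simp [Finsupp.split_apply]
    simp [hsplit]
  | add d d' h h' =>
    have hsplit : (d + d').split i = d.split i + d'.split i := by
      ext; simp [Finsupp.split_apply]
    rw [map_add, Pi.add_apply, h, h', hsplit, map_add]
  | single s a =>
    obtain ⟨j, e⟩ := s
    rw [Finsupp.weight_single, varWeight]
    rcases eq_or_ne i j with rfl | hij
    · have hsplit : (Finsupp.single (⟨i, e⟩ : Σ i, N i) a).split i = Finsupp.single e a := by
        classical
        ext; simp [Finsupp.split_apply, Finsupp.single_apply]
      simp [hsplit]
    · have hsplit : (Finsupp.single (⟨j, e⟩ : Σ i, N i) a).split i = 0 := by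
        classical
        ext; simp [Finsupp.split_apply, hij.symm]
      simp [hsplit, hij]

theorem degree_eq_sum_weight_varWeight [Fintype ι] (d : (Σ i, N i) →₀ ℕ) :
    d.degree = ∑ i, Finsupp.weight (varWeight N) d i := by
  induction d using Finsupp.induction_linear with
  | zero => simp
  | add d d' h h' => simp only [map_add, Pi.add_apply, Finset.sum_add_distrib, h, h']
  | single s a => simp [Finsupp.weight_single, varWeight, ← Finset.mul_sum]

theorem weightedHomogeneousComponent_mul {σ W K : Type*} [AddCancelCommMonoid W] [CommSemiring K]
    {w : σ → W} {p : MvPolynomial σ K} {m : W} (hp : IsWeightedHomogeneous w p m) (m' : W)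
    (r : MvPolynomial σ K) :
    weightedHomogeneousComponent w (m + m') (p * r) =
      p * weightedHomogeneousComponent w m' r := by
  classical
  induction r using MvPolynomial.induction_on' with
  | monomial d a =>
    have hd := isWeightedHomogeneous_monomial w d a rfl
    have hpd := hp.mul hd
    by_cases h : Finsupp.weight w d = m'
    · subst h
      rw [hpd.weightedHomogeneousComponent_same, hd.weightedHomogeneousComponent_same]
    · rw [hpd.weightedHomogeneousComponent_ne, hd.weightedHomogeneousComponent_ne, mul_zero]
      · exact fun h' => h h'.symm
      · exact fun h' => h (add_left_cancel h').symm
  | add r s hr hs => rw [mul_add, map_add, map_add, hr, hs, mul_add]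

variable {K : Type*} [CommRing K]

theorem weightedHomogeneousComponent_multidegree_univ_eq_zero [Fintype ι]
    {p : MvPolynomial (Σ i, N i) K}
    (hp : p ∈ idealOfVars (Σ i, N i) K ^ (Fintype.card ι + 1)) :
    weightedHomogeneousComponent (varWeight N) (multidegree Finset.univ) p = 0 := by
  classical
  rw [mem_pow_idealOfVars_iff'] at hp
  ext d
  rw [coeff_weightedHomogeneousComponent, coeff_zero]
  split_ifs with h
  · refine hp d ?_
    simp [degree_eq_sum_weight_varWeight, h, multidegree_apply]
  · rfl

theorem isWeightedHomogeneous_tensorMap [Fintype ι] [∀ i, Fintype (N i)] {M : Type*}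
    (c : (∀ i, N i) → M → K) {x : ∀ i, N i → MvPolynomial (Σ i, N i) K} {S : Finset ι}
    (hmem : ∀ i ∈ S, ∀ e, IsWeightedHomogeneous (varWeight N) (x i e) (Pi.single i 1))
    (hnot : ∀ i ∉ S, ∀ e, IsWeightedHomogeneous (varWeight N) (x i e) 0) (h : M) :
    IsWeightedHomogeneous (varWeight N) (tensorMap c _ x h) (multidegree S) := by
  have hx : ∀ i e, IsWeightedHomogeneous (varWeight N) (x i e)
      (if i ∈ S then Pi.single i 1 else 0) := fun i e => by
    split_ifs with hi
    exacts [hmem i hi e, hnot i hi e]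
  have hsum : ∑ i, (if i ∈ S then (Pi.single i 1 : ι → ℕ) else 0) = multidegree S := by
    rw [Finset.sum_ite_mem, Finset.univ_inter, multidegree]
  rw [tensorMap_apply]
  refine IsWeightedHomogeneous.sum _ _ _ fun e _ => ?_
  rw [← hsum, ← add_zero (∑ i, _)]
  exact (IsWeightedHomogeneous.prod _ _ _ fun i _ => hx i (e i)).mul (isWeightedHomogeneous_C _ _)

theorem isMultilinearOn_evalAt [Finite ι] [∀ i, Finite (N i)]
    {p : MvPolynomial (Σ i, N i) K} {S : Finset ι}
    (hp : IsWeightedHomogeneous (varWeight N) p (multidegree S)) :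
    IsMultilinearOn K S fun x : ∀ i, N i → K => evalAt x p := by
  have := Fintype.ofFinite ι
  have := fun i => Fintype.ofFinite (N i)
  have hexpand : (fun x : ∀ i, N i → K => evalAt x p) = fun x => ∑ d ∈ p.support,
      LinearMap.mulLeft K (p.coeff d) (∏ i, ∏ e, x i e ^ d.split i e) := by
    ext x
    rw [evalAt, aeval_def, eval₂_eq']
    simp only [Fintype.prod_sigma, Finsupp.split_apply, LinearMap.mulLeft_apply,
      Algebra.algebraMap_self_apply]
  rw [hexpand]
  refine IsMultilinearOn.sum fun d hd => IsMultilinearOn.linearMap_comp ?_ _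
  have hdegree : ∀ i, (d.split i).degree = if i ∈ S then 1 else 0 := fun i => by
    rw [← weight_varWeight, hp (mem_support_iff.1 hd), multidegree_apply]
  refine isMultilinearOn_prod (G := fun i => N i → K)
    (f := fun i (v : N i → K) => ∏ e, v e ^ d.split i e) (fun i hi => ?_)
    fun i hi v w => ?_
  · obtain ⟨e, he⟩ := (Finsupp.sum_eq_one_iff _).1 ((hdegree i).trans (if_pos hi))
    have hproj : (fun v : N i → K => ∏ e, v e ^ d.split i e) = LinearMap.proj (R := K) e := by
      classical
      ext v
      rw [he, Finset.prod_eq_single e] <;> simp +contextual [eq_comm]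
    rw [hproj]
    exact (LinearMap.proj e).isLinear
  · have hzero : d.split i = 0 := (Finsupp.degree_eq_zero_iff _).1 ((hdegree i).trans (if_neg hi))
    simp [hzero]

end WeightedHomogeneous

/-- The set `Z` has density at least `1 / Q`. -/
def HasCodensityLE {X : Type*} (Z : Set X) (Q : ℕ) : Prop :=
  Nat.card X ≤ Z.ncard * Q

section PartitionRank

variable (K : Type*) [Semiring K] {ι : Type*} [DecidableEq ι] {G : ι → Type*}
  [∀ i, AddCommMonoid (G i)] [∀ i, Module K (G i)] {H : Type*} [AddCommMonoid H] [Module K H]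

/-- The function `f`, multilinear on `I`, has *partition rank* at most `n`: it is a sum of at most
`n` products of a scalar function which is multilinear on a nonempty part `J` of `I` and of a
function which is multilinear on the complementary part of `I`. -/
def PartitionRankLE (I : Finset ι) (f : (∀ i, G i) → H) (n : ℕ) : Prop :=
  ∃ m ≤ n, ∃ (J : Fin m → Finset ι) (α : Fin m → (∀ i, G i) → K) (A : Fin m → (∀ i, G i) → H),
    (∀ g, (J g).Nonempty ∧ J g ⊆ I) ∧ (∀ g, IsMultilinearOn K (J g) (α g)) ∧
      (∀ g, IsMultilinearOn K (I \ J g) (A g)) ∧ ∀ x, f x = ∑ g, α g x • A g x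

namespace PartitionRankLE

variable {K} {I : Finset ι} {f : (∀ i, G i) → H} {m n : ℕ}

theorem mono (hf : PartitionRankLE K I f m) (hmn : m ≤ n) : PartitionRankLE K I f n :=
  let ⟨r, hr, h⟩ := hf
  ⟨r, hr.trans hmn, h⟩

theorem of_fintype {Γ : Type*} [Fintype Γ] (hn : Fintype.card Γ ≤ n) {J : Γ → Finset ι}
    {α : Γ → (∀ i, G i) → K} {A : Γ → (∀ i, G i) → H} (hJ : ∀ g, (J g).Nonempty ∧ J g ⊆ I)
    (hα : ∀ g, IsMultilinearOn K (J g) (α g)) (hA : ∀ g, IsMultilinearOn K (I \ J g) (A g))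
    (hf : ∀ x, f x = ∑ g, α g x • A g x) : PartitionRankLE K I f n := by
  let e := (Fintype.equivFin Γ).symm
  exact ⟨_, hn, J ∘ e, α ∘ e, A ∘ e, fun g => hJ (e g), fun g => hα (e g), fun g => hA (e g),
    fun x => (hf x).trans (Equiv.sum_comp e fun g => α g x • A g x).symm⟩

end PartitionRankLE

end PartitionRank

section Extraction

variable {ι : Type u} {N : ι → Type v} {K : Type w} [Field K]

/-- The generic point near `b`. -/
noncomputable def shiftPoint (b : ∀ i, N i → K) : ∀ i, N i → MvPolynomial (Σ i, N i) K :=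
  genericPoint N K + fun i e => C (b i e)

theorem constantCoeff_evalAt_shiftPoint (b : ∀ i, N i → K) (p : MvPolynomial (Σ i, N i) K) :
    constantCoeff (evalAt (shiftPoint b) p) = evalAt b p := by
  have heval : ∀ q : MvPolynomial (Σ i, N i) K, constantCoeff q = evalAt (0 : ∀ i, N i → K) q :=
    fun q => by simp [evalAt, aeval_zero']
  rw [heval, evalAt_evalAt]
  congr 1
  ext
  simp [evalPoint, shiftPoint, evalAt, genericPoint]

variable [Fintype ι] [DecidableEq ι]

theorem exists_weightedHomogeneousComponent_eq_sum {Γ : Type*} [Fintype Γ]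
    {α : Γ → MvPolynomial (Σ i, N i) K} {S : Γ → Finset ι}
    (hα : ∀ g, IsWeightedHomogeneous (varWeight N) (α g) (multidegree (S g)))
    {p : MvPolynomial (Σ i, N i) K}
    (hp : p ∈ Ideal.span (Set.range α) ⊔ idealOfVars (Σ i, N i) K ^ (Fintype.card ι + 1)) :
    ∃ r : Γ → MvPolynomial (Σ i, N i) K,
      weightedHomogeneousComponent (varWeight N) (multidegree Finset.univ) p =
        ∑ g, α g * weightedHomogeneousComponent (varWeight N) (multidegree (S g)ᶜ) (r g) := by
  obtain ⟨y, hy, z, hz, rfl⟩ := Submodule.mem_sup.1 hp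
  obtain ⟨r, rfl⟩ := Ideal.mem_span_range_iff_exists_fun.1 hy
  refine ⟨r, ?_⟩
  rw [map_add, weightedHomogeneousComponent_multidegree_univ_eq_zero hz, add_zero, map_sum]
  refine Finset.sum_congr rfl fun g _ => ?_
  rw [mul_comm, ← weightedHomogeneousComponent_mul (hα g), multidegree, multidegree, multidegree,
    Finset.sum_add_sum_compl]

variable [∀ i, Fintype (N i)] {M : Type*}

/-- The component of multidegree `S` of the equation `p` at the generic point near `b`. -/
noncomputable def eqComponent (c : (∀ i, N i) → M → K) (a b : ∀ i, N i → K) (p : Finset ι × M)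
    (S : Finset ι) : MvPolynomial (Σ i, N i) K :=
  tensorMap c _ (S.piecewise (p.1.piecewise (genericPoint N K) 0)
    fun i e => C (mix a p.1 b i e)) p.2

variable (c : (∀ i, N i) → M → K) (a b : ∀ i, N i → K)

theorem tensorMap_mix_shiftPoint (p : Finset ι × M) :
    tensorMap c _ (mix a p.1 (shiftPoint b)) p.2 = ∑ S, eqComponent c a b p S := by
  have hmix : mix a p.1 (shiftPoint b) =
      p.1.piecewise (genericPoint N K) 0 + fun i e => C (mix a p.1 b i e) := by
    ext1 i
    by_cases hi : i ∈ p.1 <;> ext1 e <;> simp [mix, shiftPoint, hi, algebraMap_eq]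
  rw [hmix, MultilinearMap.map_add_univ, Finset.sum_apply]
  rfl

theorem eqComponent_empty (p : Finset ι × M) :
    eqComponent c a b p ∅ = C (tensorMap c K (mix a p.1 b) p.2) := by
  rw [eqComponent, Finset.piecewise_empty, ← algebraMap_eq, ← Algebra.ofId_apply, map_tensorMap]
  rfl

theorem isWeightedHomogeneous_eqComponent (p : Finset ι × M) (S : Finset ι) :
    IsWeightedHomogeneous (varWeight N) (eqComponent c a b p S) (multidegree S) := by
  refine isWeightedHomogeneous_tensorMap c (fun i hi e => ?_) (fun i hi e => ?_) p.2
  · rw [Finset.piecewise_eq_of_mem _ _ _ hi]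
    by_cases hp : i ∈ p.1
    · rw [Finset.piecewise_eq_of_mem _ _ _ hp]
      exact isWeightedHomogeneous_X K (varWeight N) ⟨i, e⟩
    · rw [Finset.piecewise_eq_of_notMem _ _ _ hp]
      exact isWeightedHomogeneous_zero K _ _
  · rw [Finset.piecewise_eq_of_notMem _ _ _ hi]
    exact isWeightedHomogeneous_C _ _

theorem weightedHomogeneousComponent_tensorMap_shiftPoint (h : M) :
    weightedHomogeneousComponent (varWeight N) (multidegree Finset.univ)
      (tensorMap c _ (shiftPoint b) h) = tensorMap c _ (genericPoint N K) h := by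
  have hsum := tensorMap_mix_shiftPoint c b b (Finset.univ, h)
  rw [mix, Finset.piecewise_univ] at hsum
  rw [hsum, map_sum, Finset.sum_eq_single Finset.univ]
  · rw [(isWeightedHomogeneous_eqComponent c b b _ _).weightedHomogeneousComponent_same,
      eqComponent, Finset.piecewise_univ, Finset.piecewise_univ]
  · intro S _ hS
    exact (isWeightedHomogeneous_eqComponent c b b _ _).weightedHomogeneousComponent_ne
      _ fun h => hS (multidegree_injective h.symm)
  · exact fun h => absurd (Finset.mem_univ _) h

theorem isUnit_mk_of_constantCoeff_ne_zero {σ : Type*} {I : Ideal (MvPolynomial σ K)} {n : ℕ}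
    (hI : idealOfVars σ K ^ n ≤ I) {p : MvPolynomial σ K} (hp : constantCoeff p ≠ 0) :
    IsUnit (Ideal.Quotient.mk I p) := by
  have hmem : p - C (constantCoeff p) ∈ idealOfVars σ K := by
    rw [← pow_one (idealOfVars σ K), mem_pow_idealOfVars_iff']
    intro d hd
    rw [Nat.lt_one_iff, Finsupp.degree_eq_zero_iff] at hd
    simp [hd, constantCoeff_eq]
  have hnil : IsNilpotent (Ideal.Quotient.mk I (p - C (constantCoeff p))) :=
    ⟨n, by rw [← map_pow]; exact Ideal.Quotient.eq_zero_iff_mem.2 (hI (Ideal.pow_mem_pow hmem n))⟩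
  have hunit : IsUnit (Ideal.Quotient.mk I (C (constantCoeff p))) :=
    ((isUnit_iff_ne_zero.2 hp).map C).map _
  have := hnil.isUnit_add_left_of_commute hunit (Commute.all _ _)
  rwa [← map_add, add_sub_cancel] at this

variable {c a b} {P : ParamPoint N M K}

theorem ParamPoint.Recovers.tensorMap_eq_zero (hrec : P.Recovers c a Finset.univ)
    (hP : P.IsSolution c a Finset.univ) {R : Type max u v w} [CommRing R] [Algebra K R]
    {w : ∀ i, N i → R} (hw : ∀ p ∈ P.eqs, tensorMap c R (mix a p.1 w) p.2 = 0)
    (hunit : IsUnit (evalAt w P.pivot)) : tensorMap c R w = 0 := by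
  ext h
  choose ε hε hpoint using fun i => hrec R w hw hunit i (Finset.mem_univ i)
  have hzero := map_tensorMap c (evalAt w) P.point h
  rw [hP.tensorMap_point, Pi.zero_apply, map_zero] at hzero
  change 0 = tensorMap c R (evalPoint w P.point) h at hzero
  rw [show evalPoint w P.point = fun i => ε i • w i from funext hpoint,
    MultilinearMap.map_smul_univ, Pi.smul_apply, smul_eq_mul] at hzero
  exact (IsUnit.mul_right_eq_zero (IsUnit.prod_univ_iff.2 hε)).1 hzero.symm

/-- The ideal modulo which `shiftPoint b` satisfies the equations of `P`. -/
noncomputable def eqIdeal (c : (∀ i, N i) → M → K) (a b : ∀ i, N i → K)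
    (P : ParamPoint N M K) : Ideal (MvPolynomial (Σ i, N i) K) :=
  Ideal.span (Set.range fun g : P.eqs × {S : Finset ι // S.Nonempty} =>
    eqComponent c a b g.1 g.2) ⊔ idealOfVars (Σ i, N i) K ^ (Fintype.card ι + 1)

theorem tensorMap_shiftPoint_mem_eqIdeal (hrec : P.Recovers c a Finset.univ)
    (hP : P.IsSolution c a Finset.univ)
    (hb : ∀ p ∈ P.eqs, tensorMap c K (mix a p.1 b) p.2 = 0) (hpivot : evalAt b P.pivot ≠ 0)
    (h : M) : tensorMap c _ (shiftPoint b) h ∈ eqIdeal c a b P := by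
  let mk := Ideal.Quotient.mkₐ K (eqIdeal c a b P)
  let w : ∀ i, N i → MvPolynomial (Σ i, N i) K ⧸ eqIdeal c a b P :=
    fun i e => mk (shiftPoint b i e)
  have hmix : ∀ L h, tensorMap c _ (mix a L w) h = mk (tensorMap c _ (mix a L (shiftPoint b)) h) :=
    fun L h => by
      rw [map_tensorMap]
      refine congrFun (congrArg _ ?_) h
      ext i e
      by_cases hi : i ∈ L
      · simp [mix, hi, w]
      · simp [mix, hi]
  have hw : ∀ p ∈ P.eqs, tensorMap c _ (mix a p.1 w) p.2 = 0 := fun p hp => by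
    rw [hmix, tensorMap_mix_shiftPoint, map_sum]
    refine Finset.sum_eq_zero fun S _ => ?_
    rcases S.eq_empty_or_nonempty with rfl | hS
    · rw [eqComponent_empty, hb p hp, C_0, map_zero]
    · exact Ideal.Quotient.eq_zero_iff_mem.2
        ((le_sup_left : _ ≤ eqIdeal c a b P) (Ideal.subset_span ⟨(⟨p, hp⟩, ⟨S, hS⟩), rfl⟩))
  have hunit : IsUnit (evalAt w P.pivot) := by
    change IsUnit (evalAt (fun i e => mk (shiftPoint b i e)) P.pivot)
    rw [← map_evalAt]
    refine isUnit_mk_of_constantCoeff_ne_zero le_sup_right ?_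
    rwa [constantCoeff_evalAt_shiftPoint]
  have hzero := congrFun (hrec.tensorMap_eq_zero hP hw hunit) h
  rw [show w = fun i e => mk (shiftPoint b i e) from rfl, ← map_tensorMap] at hzero
  exact Ideal.Quotient.eq_zero_iff_mem.1 hzero

theorem partitionRankLE_tensorMap_of_recovers (hrec : P.Recovers c a Finset.univ)
    (hP : P.IsSolution c a Finset.univ)
    (hb : ∀ p ∈ P.eqs, tensorMap c K (mix a p.1 b) p.2 = 0) (hpivot : evalAt b P.pivot ≠ 0) :
    PartitionRankLE K Finset.univ (tensorMap c K) (P.eqs.card * 2 ^ Fintype.card ι) := by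
  let α (g : P.eqs × {S : Finset ι // S.Nonempty}) := eqComponent c a b g.1 g.2
  have hα : ∀ g, IsWeightedHomogeneous (varWeight N) (α g) (multidegree (g.2 : Finset ι)) :=
    fun g => isWeightedHomogeneous_eqComponent c a b g.1 g.2
  choose r hr using fun h => exists_weightedHomogeneousComponent_eq_sum hα
    (tensorMap_shiftPoint_mem_eqIdeal hrec hP hb hpivot h)
  let A g h := weightedHomogeneousComponent (varWeight N) (multidegree (g.2 : Finset ι)ᶜ) (r h g)
  have hA : ∀ g h, IsWeightedHomogeneous (varWeight N) (A g h) (multidegree (g.2 : Finset ι)ᶜ) :=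
    fun g h => weightedHomogeneousComponent_isWeightedHomogeneous _ _
  refine PartitionRankLE.of_fintype (J := fun g : P.eqs × {S : Finset ι // S.Nonempty} => g.2)
    (α := fun g x => evalAt x (α g)) (A := fun g x h => evalAt x (A g h)) ?_
    (fun g => ⟨g.2.2, Finset.subset_univ _⟩) (fun g => isMultilinearOn_evalAt (hα g))
    (fun g => .pi fun h => isMultilinearOn_evalAt (hA g h)) fun x => ?_
  · rw [Fintype.card_prod, Fintype.card_coe]
    exact Nat.mul_le_mul_left _ ((Fintype.card_subtype_le _).trans_eq Fintype.card_finset)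
  · ext h
    have hx := congrArg (evalAt x) (hr h)
    rw [weightedHomogeneousComponent_tensorMap_shiftPoint, map_tensorMap, map_sum] at hx
    simp only [map_mul] at hx
    rw [Finset.sum_apply]
    refine Eq.trans ?_ hx
    refine congrFun (congrArg _ ?_) h
    exact (evalPoint_genericPoint x).symm

theorem two_mul_card_lt_of_two_mul_pow_le {n d q : ℕ} (h : 2 * (n * (d + 2)) ^ n ≤ q) :
    2 * n < q := by
  rcases n.eq_zero_or_pos with rfl | hn
  · simp only [mul_zero, pow_zero] at h ⊢
    omega
  · nlinarith [Nat.le_self_pow hn.ne' (n * (d + 2))]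

theorem partitionRankLE_tensorMap [Fintype K] (c : (∀ i, N i) → M → K) {d : ℕ}
    (hq : 2 * (Fintype.card ι * (d + 2)) ^ Fintype.card ι ≤ Fintype.card K)
    (hdense : HasCodensityLE {x | tensorMap c K x = 0} (Fintype.card K ^ d)) :
    PartitionRankLE K Finset.univ (tensorMap c K)
      (Fintype.card ι * (d * 2 ^ Fintype.card ι)) := by
  classical
  have hlen : (Finset.univ : Finset ι).toList.length = Fintype.card ι := Finset.length_toList _
  rw [HasCodensityLE, Nat.card_eq_fintype_card, Set.ncard_eq_toFinset_card'] at hdense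
  obtain ⟨a, ha, hthin⟩ := exists_thinness_lt_half (F := tensorMap c K)
    (m := Fintype.card K ^ (d + 1)) (l := (Finset.univ : Finset ι).toList) (by
      have hpos := Fintype.card_pos.trans_le hdense
      have hlt := two_mul_card_lt_of_two_mul_pow_le hq
      rw [hlen, pow_succ, ← mul_assoc]
      simp only [Set.toFinset_ofPred] at hdense hpos
      nlinarith)
  obtain ⟨P, hP⟩ := exists_isGeneric ha (Finset.nodup_toList _) (by rwa [hlen]) hthin
  have hsol := hP.isSolution
  have hrec := hP.recovers
  rw [Finset.toList_toFinset] at hsol hrec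
  obtain ⟨u, hu⟩ : ∃ u : ∀ i, N i → K, evalAt u (evalAt P.point P.pivot) ≠ 0 := by
    have hcard := card_le_two_mul_card_evalAt_ne_zero hP.pivot_ne_zero
      ((Nat.mul_le_mul_left 2 hP.totalDegree_pivot).trans (by rwa [hlen]))
    obtain ⟨u, hu⟩ := Finset.card_pos.1
      (CanonicallyOrderedAdd.mul_pos.1 (Fintype.card_pos.trans_le hcard)).2
    exact ⟨u, (Finset.mem_filter.1 hu).2⟩
  rw [evalAt_evalAt] at hu
  have hsolve : ∀ p ∈ P.eqs, tensorMap c K (mix a p.1 (evalPoint u P.point)) p.2 = 0 :=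
    fun p hp => by
      have hzero := congrArg (evalAt u) (hsol.tensorMap_mix p hp)
      rw [map_tensorMap, map_zero] at hzero
      rw [← evalPoint_mix]
      exact hzero
  refine (partitionRankLE_tensorMap_of_recovers hrec hsol hsolve hu).mono ?_
  rw [mul_left_comm, ← mul_assoc]
  exact Nat.mul_le_mul_right _ (hP.card_eqs.trans_eq (by rw [hlen]))

end Extraction

section Copies

variable {ι : Type*} {Y : ι → Type*}

/-- The set of all families of `m + 1` copies of each coordinate such that, whichever copies of the
coordinates in `S` are chosen, they lie in `Z` together with the zeroth copy of the other
coordinates. -/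
def copies (Z : Set (∀ i, Y i)) (m : ℕ) (S : Finset ι) : Set (∀ i, Fin (m + 1) → Y i) :=
  {y | ∀ s : ι → Fin (m + 1), (∀ i ∉ S, s i = 0) → (fun i => y i (s i)) ∈ Z}

variable {Z : Set (∀ i, Y i)}

section Insert

variable [DecidableEq ι] {m : ℕ} {S : Finset ι} {i : ι}

theorem mem_copies_insert (hi : i ∉ S) {y : ∀ i, Fin (m + 1) → Y i} :
    y ∈ copies Z m (insert i S) ↔ ∀ t, update y i (fun _ => y i t) ∈ copies Z m S := by
  have happly : ∀ (s : ι → Fin (m + 1)) t,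
      (fun j => update y i (fun _ => y i t) j (s j)) = fun j => y j (update s i t j) := by
    intro s t
    ext j
    by_cases hj : j = i
    · subst hj; simp
    · simp [update_of_ne hj]
  constructor
  · intro h t s hs
    rw [happly]
    refine h _ fun j hj => ?_
    rw [Finset.mem_insert, not_or] at hj
    rw [update_of_ne hj.1, hs j hj.2]
  · intro h s hs
    have hmem := h (s i) (update s i 0) fun j hj => ?_
    · rwa [happly, update_idem, update_eq_self] at hmem
    · by_cases hji : j = i
      · rw [hji, update_self]
      · rw [update_of_ne hji, hs j (by simp [hji, hj])]

theorem update_mem_copies (hi : i ∉ S) {y : ∀ i, Fin (m + 1) → Y i} {u : Fin (m + 1) → Y i} :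
    update y i u ∈ copies Z m S ↔ update y i (fun _ => u 0) ∈ copies Z m S := by
  refine forall₂_congr fun s hs => iff_of_eq (congrArg (· ∈ Z) (funext fun j => ?_))
  by_cases hj : j = i
  · subst hj; simp [hs j hi]
  · simp [update_of_ne hj]

theorem ncard_forall_apply_mem {V κ : Type*} [Finite κ] (A : Set V) :
    {u : κ → V | ∀ t, u t ∈ A}.ncard = A.ncard ^ Nat.card κ := by
  rw [← Nat.card_coe_set_eq, ← Nat.card_coe_set_eq, ← Nat.card_fun]
  exact Nat.card_congr Equiv.subtypePiEquivPi

theorem ncard_apply_zero_mem {V : Type*} (m : ℕ) (A : Set V) :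
    {u : Fin (m + 1) → V | u 0 ∈ A}.ncard = Nat.card V ^ m * A.ncard := by
  have hprod : {u : Fin (m + 1) → V | u 0 ∈ A} =
      (Fin.consEquiv fun _ => V) '' (A ×ˢ Set.univ) := by
    ext u
    refine ⟨fun hu => ⟨(u 0, Fin.tail u), ⟨hu, trivial⟩, Fin.cons_self_tail u⟩, ?_⟩
    rintro ⟨⟨v, u⟩, ⟨hv, -⟩, rfl⟩
    exact hv
  rw [hprod, Set.ncard_image_of_injective _ (Equiv.injective _), Set.ncard_prod, Set.ncard_univ,
    Nat.card_fun, Nat.card_fin, mul_comm]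

theorem card_mul_ncard_eq_sum [Fintype ι] [∀ i, Fintype (Y i)] (i : ι) (Z : Set (∀ i, Y i)) :
    Nat.card (Y i) * Z.ncard = ∑ y, {v | update y i v ∈ Z}.ncard := by
  classical
  have hsum := sum_sum_update i fun y => if y ∈ Z then 1 else 0
  simp only [Finset.sum_boole, Nat.cast_id, smul_eq_mul] at hsum
  simp only [Set.ncard_eq_toFinset_card', Set.toFinset_ofPred, Nat.card_eq_fintype_card, hsum]
  simp

theorem HasCodensityLE.copies_insert [Finite ι] [∀ i, Finite (Y i)] (hi : i ∉ S) {Q : ℕ}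
    (h : HasCodensityLE (copies Z m S) Q) :
    HasCodensityLE (copies Z m (insert i S)) (Q ^ (m + 1)) := by
  have := Fintype.ofFinite ι
  have := fun i => Fintype.ofFinite (Y i)
  rw [HasCodensityLE] at h ⊢
  rcases isEmpty_or_nonempty (∀ i, Fin (m + 1) → Y i) with hX | ⟨⟨y₀⟩⟩
  · simp
  have hV : 0 < Nat.card (Y i) := Nat.card_pos_iff.2 ⟨⟨y₀ i 0⟩, inferInstance⟩
  have hX : 0 < Nat.card (∀ i, Fin (m + 1) → Y i) := Nat.card_pos_iff.2 ⟨⟨y₀⟩, inferInstance⟩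
  set X := Nat.card (∀ i, Fin (m + 1) → Y i) with hX_def
  have hcard : Nat.card (Fin (m + 1) → Y i) = Nat.card (Y i) ^ (m + 1) := by simp
  let A y := {v | update y i (fun _ : Fin (m + 1) => v) ∈ copies Z m S}
  have hS : Nat.card (Y i) * (copies Z m S).ncard = ∑ y, (A y).ncard := by
    have hsum := card_mul_ncard_eq_sum i (copies Z m S)
    have hfiber : ∀ y, {u | update y i u ∈ copies Z m S} = {u | u 0 ∈ A y} :=
      fun y => Set.ext fun u => update_mem_copies hi
    simp only [hfiber, ncard_apply_zero_mem, ← Finset.mul_sum, hcard, pow_succ, mul_assoc] at hsum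
    exact Nat.eq_of_mul_eq_mul_left (pow_pos hV m) hsum
  have hinsert : Nat.card (Y i) ^ (m + 1) * (copies Z m (insert i S)).ncard =
      ∑ y, (A y).ncard ^ (m + 1) := by
    have hsum := card_mul_ncard_eq_sum i (copies Z m (insert i S))
    have hfiber : ∀ y, {u | update y i u ∈ copies Z m (insert i S)} = {u | ∀ t, u t ∈ A y} :=
      fun y => Set.ext fun u => by simp [mem_copies_insert hi, A]
    simpa only [hfiber, ncard_forall_apply_mem, hcard, Nat.card_fin] using hsum
  have hmean : (∑ y, (A y).ncard) ^ (m + 1) ≤ X ^ m * ∑ y, (A y).ncard ^ (m + 1) := by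
    rw [hX_def, Nat.card_eq_fintype_card, ← Finset.card_univ]
    exact pow_sum_le_card_mul_sum_pow (fun _ _ => Nat.zero_le _) m
  rw [← hS, ← hinsert, mul_pow, mul_left_comm] at hmean
  have hle := Nat.le_of_mul_le_mul_left hmean (pow_pos hV _)
  refine Nat.le_of_mul_le_mul_left ?_ (pow_pos hX m)
  calc X ^ m * X = X ^ (m + 1) := (pow_succ X m).symm
    _ ≤ ((copies Z m S).ncard * Q) ^ (m + 1) := Nat.pow_le_pow_left h _
    _ = (copies Z m S).ncard ^ (m + 1) * Q ^ (m + 1) := mul_pow _ _ _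
    _ ≤ X ^ m * (copies Z m (insert i S)).ncard * Q ^ (m + 1) := Nat.mul_le_mul_right _ hle
    _ = X ^ m * ((copies Z m (insert i S)).ncard * Q ^ (m + 1)) := mul_assoc _ _ _

end Insert

theorem HasCodensityLE.forall_copies [Fintype ι] [∀ i, Finite (Y i)] {Q : ℕ}
    (h : HasCodensityLE Z Q) (m : ℕ) :
    HasCodensityLE {y : ∀ i, Fin (m + 1) → Y i | ∀ s : ι → Fin (m + 1), (fun i => y i (s i)) ∈ Z}
      (Q ^ (m + 1) ^ Fintype.card ι) := by
  classical
  have hcopies : ∀ S : Finset ι, HasCodensityLE (copies Z m S) (Q ^ (m + 1) ^ S.card) := by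
    intro S
    induction S using Finset.induction_on with
    | empty =>
      let e := Equiv.piComm fun (_ : Fin (m + 1)) i => Y i
      have hzero : copies Z m ∅ = e '' {u | u 0 ∈ Z} := by
        ext y
        refine ⟨fun hy => ⟨e.symm y, hy (fun _ => 0) fun _ _ => rfl, rfl⟩, ?_⟩
        rintro ⟨u, hu, rfl⟩ s hs
        obtain rfl : s = fun _ => 0 := funext fun i => hs i (Finset.notMem_empty i)
        exact hu
      rw [HasCodensityLE, hzero, Set.ncard_image_of_injective _ e.injective, ncard_apply_zero_mem,
        ← Nat.card_congr e, Nat.card_fun, Nat.card_fin, pow_succ, mul_assoc, Finset.card_empty,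
        pow_zero, pow_one]
      exact Nat.mul_le_mul_left _ h
    | insert i S hi ih =>
      rw [Finset.card_insert_of_notMem hi, pow_succ, pow_mul]
      exact ih.copies_insert hi
  simpa [copies] using hcopies Finset.univ

end Copies

section BaseChange

variable {ι : Type u} [Fintype ι] [DecidableEq ι] {N : ι → Type v} [∀ i, Fintype (N i)]
  {M F : Type*} [Field F] {K : Type w} [Field K] [Algebra F K] (c : (∀ i, N i) → M → F)

theorem tensorMap_sum_smul {κ : Type*} [Fintype κ] (b : κ → K) (y : ∀ i, κ → N i → F) (h : M) :
    tensorMap c K (fun i e => ∑ t, y i t e • b t) h =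
      ∑ s : ι → κ, (∏ i, b (s i)) * algebraMap F K (tensorMap c F (fun i => y i (s i)) h) := by
  have hexpand : (fun i e => ∑ t, y i t e • b t) =
      fun i => ∑ t, b t • fun e => algebraMap F K (y i t e) := by
    ext i e
    simp [Finset.sum_apply, Algebra.smul_def, mul_comm]
  rw [hexpand, MultilinearMap.map_sum, Finset.sum_apply]
  refine Finset.sum_congr rfl fun s _ => ?_
  rw [MultilinearMap.map_smul_univ, Pi.smul_apply, smul_eq_mul, ← Algebra.ofId_apply,
    map_tensorMap]
  rfl

theorem HasCodensityLE.tensorMap_extension [Finite F] {d m : ℕ}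
    (b : Module.Basis (Fin (m + 1)) F K)
    (hdense : HasCodensityLE {x | tensorMap c F x = 0} (Nat.card F ^ d)) :
    HasCodensityLE {x | tensorMap c K x = 0} (Nat.card K ^ (d * (m + 1) ^ Fintype.card ι)) := by
  classical
  have := Fintype.ofFinite F
  have hK : Nat.card K = Nat.card F ^ (m + 1) := by
    rw [Nat.card_congr b.equivFun.toEquiv, Nat.card_fun, Nat.card_fin]
  have : Finite K := Nat.finite_of_card_ne_zero (by rw [hK]; exact pow_ne_zero _ Nat.card_pos.ne')
  let φ : (∀ i, Fin (m + 1) → N i → F) ≃ ∀ i, N i → K := Equiv.piCongrRight fun i =>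
    (Equiv.piComm fun _ _ => F).trans (Equiv.piCongrRight fun _ => b.equivFun.symm.toEquiv)
  have hφ : ∀ y, φ y = fun i e => ∑ t, y i t e • b t := fun y =>
    funext fun i => funext fun e => b.equivFun_symm_apply _
  have hzeros : φ '' {y | ∀ s : ι → Fin (m + 1), tensorMap c F (fun i => y i (s i)) = 0} ⊆
      {x | tensorMap c K x = 0} := by
    rintro _ ⟨y, hy, rfl⟩
    ext h
    rw [hφ, tensorMap_sum_smul]
    refine Finset.sum_eq_zero fun s _ => ?_
    rw [hy s, Pi.zero_apply, map_zero, mul_zero]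
  have hcopies := hdense.forall_copies m
  rw [HasCodensityLE, Nat.card_congr φ, ← pow_mul] at hcopies
  refine hcopies.trans (Nat.mul_le_mul ?_ (Nat.pow_le_pow_left ?_ _))
  · exact (Set.ncard_image_of_injective _ φ.injective).symm.trans_le
      (Set.ncard_le_ncard hzeros (Set.toFinite _))
  · exact hK ▸ Nat.le_self_pow m.succ_ne_zero _

theorem PartitionRankLE.of_extension {n m : ℕ} (b : Module.Basis (Fin m) F K)
    (hrank : PartitionRankLE K Finset.univ (tensorMap (fun e h => algebraMap F K (c e h)) K) n) :
    PartitionRankLE F Finset.univ (tensorMap c F) (n * m) := by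
  obtain ⟨r, hr, J, α, A, hJ, hα, hA, hsum⟩ := hrank
  obtain ⟨τ, hτ⟩ := LinearMap.exists_leftInverse_of_injective (Algebra.linearMap F K)
    (LinearMap.ker_eq_bot.2 (algebraMap F K).injective)
  let φ i : (N i → F) →ₗ[F] N i → K := (Algebra.linearMap F K).compLeft (N i)
  let L t : (M → K) →ₗ[F] M → F := (τ ∘ₗ LinearMap.mulLeft F (b t)).compLeft M
  let α' (p : Fin r × Fin m) (x : ∀ i, N i → F) : F := b.coord p.2 (α p.1 fun i => φ i (x i))
  let A' (p : Fin r × Fin m) (x : ∀ i, N i → F) : M → F := L p.2 (A p.1 fun i => φ i (x i))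
  have hcard : Fintype.card (Fin r × Fin m) ≤ n * m := by
    simpa using Nat.mul_le_mul_right m hr
  refine PartitionRankLE.of_fintype (α := α') (A := A') hcard (fun p => hJ p.1)
    (fun p => ((hα p.1).restrictScalars.comp_linearMap φ).linearMap_comp (b.coord p.2))
    (fun p => ((hA p.1).restrictScalars.comp_linearMap φ).linearMap_comp (L p.2)) fun x => ?_
  ext h
  have hbase : algebraMap F K (tensorMap c F x h) =
      ∑ g, α g (fun i => φ i (x i)) * A g (fun i => φ i (x i)) h := by
    have hx := congrFun (hsum fun i => φ i (x i)) h
    rw [Finset.sum_apply] at hx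
    rw [← Algebra.ofId_apply, map_tensorMap]
    refine Eq.trans ?_ hx
    simp only [tensorMap_apply]
    rfl
  have hretract : tensorMap c F x h = τ (algebraMap F K (tensorMap c F x h)) :=
    (LinearMap.congr_fun hτ _).symm
  rw [hretract, hbase, map_sum, Fintype.sum_prod_type, Finset.sum_apply]
  refine Finset.sum_congr rfl fun g _ => ?_
  conv_lhs => rw [← b.sum_repr (α g _), Finset.sum_mul, map_sum]
  simp [α', A', L]

end BaseChange

theorem exists_mul_pow_le_two_pow (n : ℕ) :
    ∃ M₀ : ℕ, ∀ m ≥ M₀, ∀ k ≤ n, 2 * (k * (m * (m + 1) ^ k + 2)) ^ k ≤ 2 ^ (m + 1) := by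
  let a := 3 * (n + 1)
  have hlim := tendsto_pow_const_div_const_pow_of_one_lt ((n + 1) * n) (one_lt_two (α := ℝ))
  have hpos : (0 : ℝ) < 1 / (2 * a ^ n) := by positivity
  obtain ⟨M₀, hM₀⟩ := Filter.eventually_atTop.1 (hlim.eventually (gt_mem_nhds hpos))
  refine ⟨M₀, fun m hm k hk => ?_⟩
  have hdom : (m + 1) ^ ((n + 1) * n) * (2 * a ^ n) ≤ 2 ^ (m + 1) := by
    have hlt := hM₀ (m + 1) (by lia)
    rw [div_lt_div_iff₀ (by positivity) (by positivity), one_mul] at hlt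
    exact_mod_cast hlt.le
  have hbase : k * (m * (m + 1) ^ k + 2) ≤ a * (m + 1) ^ (n + 1) := by
    have hone : 1 ≤ (m + 1) ^ (n + 1) := Nat.one_le_pow _ _ m.succ_pos
    have hmul : m * (m + 1) ^ k ≤ (m + 1) ^ (n + 1) := by
      calc m * (m + 1) ^ k ≤ (m + 1) * (m + 1) ^ n := by gcongr <;> lia
        _ = (m + 1) ^ (n + 1) := (pow_succ' _ _).symm
    calc k * (m * (m + 1) ^ k + 2) ≤ (n + 1) * (3 * (m + 1) ^ (n + 1)) :=
          Nat.mul_le_mul (by lia) (by lia)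
      _ = a * (m + 1) ^ (n + 1) := by ring
  calc 2 * (k * (m * (m + 1) ^ k + 2)) ^ k ≤ 2 * (a * (m + 1) ^ (n + 1)) ^ n := by
        refine Nat.mul_le_mul_left 2 ((Nat.pow_le_pow_left hbase k).trans ?_)
        exact Nat.pow_le_pow_right (by positivity) hk
    _ = (m + 1) ^ ((n + 1) * n) * (2 * a ^ n) := by rw [mul_pow, ← pow_mul]; ring
    _ ≤ 2 ^ (m + 1) := hdom

theorem exists_finite_extension (F : Type*) [Field F] [Finite F] (m : ℕ) [NeZero m] :
    ∃ (K : Type) (_ : Field K) (_ : Algebra F K), Nonempty (Module.Basis (Fin m) F K) := by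
  obtain ⟨p, hp⟩ := CharP.exists F
  have : Fact p.Prime := ⟨CharP.char_is_prime F p⟩
  exact ⟨FiniteField.Extension F p m, inferInstance, inferInstance,
    ⟨Module.finBasisOfFinrankEq F _ (FiniteField.finrank_extension F p m)⟩⟩

/- The polynomial method needs the field to be large compared with the codensity, so it is applied
over an extension; the degree of a large enough extension is only linear in `d`. -/
theorem exists_partitionRankLE_tensorMap (n : ℕ) :
    ∃ C : ℕ, ∀ {ι : Type u} [Fintype ι] [DecidableEq ι], Fintype.card ι ≤ n →
      ∀ {N : ι → Type v} [∀ i, Fintype (N i)] {M F : Type*} [Field F] [Finite F]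
        (c : (∀ i, N i) → M → F) {d : ℕ},
        HasCodensityLE {x | tensorMap c F x = 0} (Nat.card F ^ d) →
          PartitionRankLE F Finset.univ (tensorMap c F) (C * (d + 1) ^ (n + 2)) := by
  obtain ⟨M₀, hM₀⟩ := exists_mul_pow_le_two_pow n
  refine ⟨n * 2 ^ n * (M₀ + 1) ^ (n + 1), fun {ι} _ _ hn {N} _ {M F} _ _ c d hdense => ?_⟩
  obtain ⟨K, _, _, ⟨b⟩⟩ := exists_finite_extension F (M₀ + d + 1)
  have hKF : Nat.card K = Nat.card F ^ (M₀ + d + 1) := by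
    rw [Nat.card_congr b.equivFun.toEquiv, Nat.card_fun, Nat.card_fin]
  have : Finite K := Nat.finite_of_card_ne_zero (by rw [hKF]; exact pow_ne_zero _ Nat.card_pos.ne')
  have := Fintype.ofFinite K
  have hK : 2 ^ (M₀ + d + 1) ≤ Fintype.card K := by
    rw [← Nat.card_eq_fintype_card, hKF]
    exact Nat.pow_le_pow_left Finite.one_lt_card _
  have hext := hdense.tensorMap_extension c b
  have hmap : tensorMap c K = tensorMap (fun e h => algebraMap F K (c e h)) K := by
    ext; simp [tensorMap_apply]
  rw [hmap, Nat.card_eq_fintype_card] at hext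
  have hlarge : 2 * (Fintype.card ι * (d * (M₀ + d + 1) ^ Fintype.card ι + 2)) ^ Fintype.card ι ≤
      Fintype.card K := by
    refine le_trans ?_ ((hM₀ (M₀ + d) (by lia) _ hn).trans hK)
    gcongr
    lia
  refine ((partitionRankLE_tensorMap _ hlarge hext).of_extension c b).mono ?_
  calc Fintype.card ι * (d * (M₀ + d + 1) ^ Fintype.card ι * 2 ^ Fintype.card ι) * (M₀ + d + 1)
      ≤ n * (d * (M₀ + d + 1) ^ n * 2 ^ n) * (M₀ + d + 1) := by gcongr <;> lia
    _ = n * 2 ^ n * (d * (M₀ + d + 1) ^ (n + 1)) := by ring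
    _ ≤ n * 2 ^ n * ((d + 1) * ((M₀ + 1) * (d + 1)) ^ (n + 1)) := by
      gcongr
      · lia
      · nlinarith
    _ = n * 2 ^ n * (M₀ + 1) ^ (n + 1) * (d + 1) ^ (n + 2) := by rw [mul_pow]; ring

section Restriction

variable {ι : Type*} [DecidableEq ι] {G : ι → Type*} {I : Finset ι}

theorem restrict_update (x : ∀ i, G i) (i : I) (v : G i) :
    I.restrict (update x i v) = update (I.restrict x) i v := by
  ext j
  by_cases hj : j = i
  · subst hj; simp
  · simp [update_of_ne hj, update_of_ne (Subtype.coe_injective.ne hj)]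

variable {R : Type*} [Semiring R] [∀ i, AddCommMonoid (G i)] [∀ i, Module R (G i)] {H : Type*}
  [AddCommMonoid H] [Module R H]

theorem IsMultilinearOn.comp_restrict {J : Finset I} {f : (∀ i : I, G i) → H}
    (hf : IsMultilinearOn R J f) :
    IsMultilinearOn R (J.map (Embedding.subtype _)) fun x => f (I.restrict x) := by
  refine hf.comp (fun j hj x y h => h j (Finset.mem_map_of_mem _ hj)) fun i hi => ?_
  obtain ⟨j, hj, rfl⟩ := Finset.mem_map.1 hi
  exact ⟨j, hj, LinearMap.id, fun x v => restrict_update x j v⟩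

theorem PartitionRankLE.comp_restrict {f : (∀ i : I, G i) → H} {n : ℕ}
    (hf : PartitionRankLE R Finset.univ f n) :
    PartitionRankLE R I (fun x => f (I.restrict x)) n := by
  obtain ⟨m, hm, J, α, A, hJ, hα, hA, hsum⟩ := hf
  have hcompl : ∀ g, I \ (J g).map (Embedding.subtype _) =
      (Finset.univ \ J g).map (Embedding.subtype _) := fun g => by
    rw [Finset.map_sdiff, Finset.univ_eq_attach, Finset.attach_map_val]
  refine ⟨m, hm, fun g => (J g).map (Embedding.subtype _), fun g x => α g (I.restrict x),
    fun g x => A g (I.restrict x), fun g => ⟨(hJ g).1.map, ?_⟩, fun g => (hα g).comp_restrict,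
    fun g => ?_, fun x => hsum _⟩
  · exact fun i hi => Finset.property_of_mem_map_subtype _ hi
  · rw [hcompl]
    exact (hA g).comp_restrict

theorem PartitionRankLE.comp_linearMap {f : (∀ i, G i) → H} {n : ℕ} (hf : PartitionRankLE R I f n)
    {G' : ι → Type*} [∀ i, AddCommMonoid (G' i)] [∀ i, Module R (G' i)]
    (φ : ∀ i, G' i →ₗ[R] G i) {H' : Type*} [AddCommMonoid H'] [Module R H'] (L : H →ₗ[R] H') :
    PartitionRankLE R I (fun x => L (f fun i => φ i (x i))) n := by
  obtain ⟨m, hm, J, α, A, hJ, hα, hA, hsum⟩ := hf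
  exact ⟨m, hm, J, _, _, hJ, fun g => (hα g).comp_linearMap φ,
    fun g => ((hA g).comp_linearMap φ).linearMap_comp L, fun x => by
      simp only [hsum, map_sum, map_smul]⟩

/-- The extension by zero of a family of vectors indexed by `I`. -/
def extendZero (y : ∀ i : I, G i) (i : ι) : G i :=
  if h : i ∈ I then y ⟨i, h⟩ else 0

theorem extendZero_update (y : ∀ i : I, G i) (i : I) (v : G i) :
    extendZero (update y i v) = update (extendZero y) i v := by
  ext j
  by_cases hj : j = i
  · subst hj; simp [extendZero]
  · rw [update_of_ne hj, extendZero, extendZero]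
    split_ifs with h
    · exact update_of_ne (fun h' => hj (congrArg Subtype.val h')) _ _
    · rfl

theorem IsMultilinearOn.extendZero_restrict {f : (∀ i, G i) → H} (hf : IsMultilinearOn R I f)
    (x : ∀ i, G i) : f (extendZero (I.restrict x)) = f x :=
  hf.dependsOn fun _ hi => dif_pos hi

/-- A function which is multilinear on `I`, as a multilinear map in the vectors indexed by `I`. -/
def IsMultilinearOn.toMultilinearMap {f : (∀ i, G i) → H} (hf : IsMultilinearOn R I f) :
    MultilinearMap R (fun i : I => G i) H :=
  MultilinearMap.mk' (fun y => f (extendZero y))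
    (fun y i v w => by
      simp only [extendZero_update]
      exact hf.map_update_add i i.2 _ v w)
    fun y i t v => by
      simp only [extendZero_update]
      exact hf.map_update_smul i i.2 _ t v

theorem IsMultilinearOn.hasCodensityLE_toMultilinearMap [Finite ι] [∀ i, Finite (G i)]
    {f : (∀ i, G i) → H} (hf : IsMultilinearOn R I f) {Q : ℕ}
    (hdense : HasCodensityLE {x | f x = 0} Q) :
    HasCodensityLE {y | hf.toMultilinearMap y = 0} Q := by
  let e := Equiv.piEquivPiSubtypeProd (· ∈ I) G
  have hzeros : e '' {x | f x = 0} = {y | hf.toMultilinearMap y = 0} ×ˢ Set.univ := by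
    ext p
    obtain ⟨x, rfl⟩ := e.surjective p
    rw [e.injective.mem_set_image, Set.mem_ofPred_eq, ← hf.extendZero_restrict x]
    exact (and_iff_left trivial).symm
  rw [HasCodensityLE, ← Set.ncard_image_of_injective _ e.injective, hzeros, Set.ncard_prod,
    Nat.card_congr e, Nat.card_prod, Set.ncard_univ, mul_right_comm] at hdense
  exact Nat.le_of_mul_le_mul_right hdense Nat.card_pos

end Restriction

section VectorSpace

theorem exists_partitionRankLE_multilinearMap (n : ℕ) :
    ∃ C : ℕ, ∀ {ι : Type u} [Fintype ι] [DecidableEq ι], Fintype.card ι ≤ n →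
      ∀ {F : Type*} [Field F] [Finite F] {G : ι → Type*} [∀ i, AddCommGroup (G i)]
        [∀ i, Module F (G i)] [∀ i, Finite (G i)] {H : Type*} [AddCommGroup H] [Module F H]
        (f : MultilinearMap F G H) {d : ℕ},
        HasCodensityLE {x | f x = 0} (Nat.card F ^ d) →
          PartitionRankLE F Finset.univ f (C * (d + 1) ^ (n + 2)) := by
  obtain ⟨C, hC⟩ := exists_partitionRankLE_tensorMap.{u, 0} n
  refine ⟨C, fun {ι} _ _ hn {F} _ _ {G} _ _ _ {H} _ _ f {d} hdense => ?_⟩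
  let b i := Module.finBasis F (G i)
  let coord : H →ₗ[F] _ → F :=
    Finsupp.lcoeFun ∘ₗ (Module.Basis.ofVectorSpace F H).repr.toLinearMap
  have hinj : Injective coord :=
    DFunLike.coe_injective.comp (Module.Basis.ofVectorSpace F H).repr.injective
  obtain ⟨L, hL⟩ := LinearMap.exists_leftInverse_of_injective coord (LinearMap.ker_eq_bot.2 hinj)
  let c (e : ∀ i, Fin (Module.finrank F (G i))) := coord (f fun i => b i (e i))
  have htensor : ∀ x, tensorMap c F (fun i => (b i).equivFun (x i)) = coord (f x) := fun x => by
    have hx : x = fun i => ∑ e, (b i).equivFun (x i) e • b i e :=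
      funext fun i => ((b i).sum_equivFun (x i)).symm
    conv_rhs => rw [hx, MultilinearMap.map_sum, map_sum]
    ext h
    rw [tensorMap_apply, Finset.sum_apply]
    refine Finset.sum_congr rfl fun e _ => ?_
    rw [MultilinearMap.map_smul_univ, map_smul, Pi.smul_apply, smul_eq_mul]
    rfl
  let E : (∀ i, G i) ≃ ∀ i, Fin (Module.finrank F (G i)) → F :=
    Equiv.piCongrRight fun i => (b i).equivFun.toEquiv
  have hzeros : E '' {x | f x = 0} ⊆ {y | tensorMap c F y = 0} := by
    rintro _ ⟨x, hx : f x = 0, rfl⟩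
    exact (htensor x).trans (by rw [hx, map_zero])
  have hrank := hC hn c (d := d) <| by
    rw [HasCodensityLE, Nat.card_congr E.symm]
    refine hdense.trans (Nat.mul_le_mul_right _ ?_)
    exact (Set.ncard_image_of_injective _ E.injective).symm.trans_le
      (Set.ncard_le_ncard hzeros (Set.toFinite _))
  have hcomp := hrank.comp_linearMap (fun i => (b i).equivFun.toLinearMap) L
  refine (congrArg (PartitionRankLE F _ · _) (funext fun x => ?_)).mp hcomp
  exact (congrArg L (htensor x)).trans (LinearMap.congr_fun hL (f x))

theorem exists_partitionRankLE (n : ℕ) :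
    ∃ C : ℕ, ∀ {ι : Type u} [Fintype ι] [DecidableEq ι], Fintype.card ι ≤ n →
      ∀ {F : Type*} [Field F] [Finite F] {G : ι → Type*} [∀ i, AddCommGroup (G i)]
        [∀ i, Module F (G i)] [∀ i, Finite (G i)] {H : Type*} [AddCommGroup H] [Module F H]
        {I : Finset ι} {f : (∀ i, G i) → H} {d : ℕ}, IsMultilinearOn F I f →
        HasCodensityLE {x | f x = 0} (Nat.card F ^ d) →
          PartitionRankLE F I f (C * (d + 1) ^ (n + 2)) := by
  obtain ⟨C, hC⟩ := exists_partitionRankLE_multilinearMap n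
  refine ⟨C, fun {ι} _ _ hn {F} _ _ {G} _ _ _ {H} _ _ {I f d} hf hdense => ?_⟩
  have hI : Fintype.card I ≤ n := by
    rw [Fintype.card_coe]
    exact (Finset.card_le_univ I).trans hn
  have hrank := hC hI hf.toMultilinearMap (hf.hasCodensityLE_toMultilinearMap hdense)
  refine (congrArg (PartitionRankLE F _ · _) (funext fun x => ?_)).mp hrank.comp_restrict
  exact hf.extendZero_restrict x

end VectorSpace

section MixedDifference

variable {ι : Type*} [DecidableEq ι] {G : ι → Type*} {H : Type*} [AddCommGroup H]

/-- The iterated difference of `f` in the directions `I`: the alternating sum of its values at the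
points which agree with `y` on a subset of `I` and with `x` elsewhere. -/
def mixedDiff (I : Finset ι) (f : (∀ i, G i) → H) (x y : ∀ i, G i) : H :=
  ∑ S ∈ I.powerset, (-1 : ℤ) ^ (I \ S).card • f (S.piecewise y x)

theorem mixedDiff_empty (f : (∀ i, G i) → H) (x y : ∀ i, G i) : mixedDiff ∅ f x y = f x := by
  simp [mixedDiff]

theorem mixedDiff_insert {I : Finset ι} {i : ι} (hi : i ∉ I) (f : (∀ i, G i) → H)
    (x y : ∀ i, G i) :
    mixedDiff (insert i I) f x y = mixedDiff I f (update x i (y i)) y - mixedDiff I f x y := by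
  rw [sub_eq_neg_add, mixedDiff, Finset.sum_powerset_insert hi, mixedDiff, mixedDiff,
    ← Finset.sum_neg_distrib]
  refine congrArg₂ _ (Finset.sum_congr rfl fun S hS => ?_) (Finset.sum_congr rfl fun S hS => ?_)
  all_goals have hiS : i ∉ S := fun h => hi (Finset.mem_powerset.1 hS h)
  · rw [Finset.insert_sdiff_of_notMem _ hiS, Finset.card_insert_of_notMem (by simp [hi]), pow_succ,
      mul_neg_one, neg_smul]
  · rw [Finset.insert_sdiff_insert, Finset.sdiff_insert_of_notMem hi, Finset.piecewise_insert,
      Finset.update_piecewise_of_notMem _ _ _ hiS]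

theorem mixedDiff_eq_zero {I J : Finset ι} {f : (∀ i, G i) → H} (hf : DependsOn f (J : Set ι))
    (hIJ : ¬ I ⊆ J) (x y : ∀ i, G i) : mixedDiff I f x y = 0 := by
  obtain ⟨i, hiI, hiJ⟩ := Finset.not_subset.1 hIJ
  rw [← Finset.insert_erase hiI, mixedDiff_insert (Finset.notMem_erase i I), sub_eq_zero]
  refine Finset.sum_congr rfl fun S _ => congrArg _ (hf fun j hj => ?_)
  have hji : j ≠ i := fun h => hiJ (h ▸ hj)
  simp [Finset.piecewise, update_of_ne hji]

theorem sum_mixedDiff (S : Finset ι) (f : (∀ i, G i) → H) (x y : ∀ i, G i) :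
    ∑ I ∈ S.powerset, mixedDiff I f x y = f (S.piecewise y x) := by
  induction S using Finset.induction_on generalizing x with
  | empty => simp [mixedDiff_empty]
  | insert i S hi ih =>
    rw [Finset.sum_powerset_insert hi, Finset.piecewise_insert,
      Finset.update_piecewise_of_notMem _ _ _ hi, ← ih, ← Finset.sum_add_distrib]
    refine Finset.sum_congr rfl fun I hI => ?_
    rw [mixedDiff_insert fun h => hi (Finset.mem_powerset.1 hI h), add_sub_cancel]

section Linear

variable {F : Type*} [Ring F] [Module F H]

theorem mixedDiff_sum_smul {κ : Type*} (s : Finset κ) (I : Finset ι) (lam : κ → F)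
    (f : κ → (∀ i, G i) → H) (x y : ∀ i, G i) :
    mixedDiff I (fun x => ∑ j ∈ s, lam j • f j x) x y = ∑ j ∈ s, lam j • mixedDiff I (f j) x y := by
  simp only [mixedDiff, Finset.smul_sum]
  rw [Finset.sum_comm]
  exact Finset.sum_congr rfl fun j _ => Finset.sum_congr rfl fun S _ => smul_comm _ _ _

variable [∀ i, AddCommGroup (G i)] [∀ i, Module F (G i)]

theorem IsMultilinearOn.mixedDiff_eq {I : Finset ι} {f : (∀ i, G i) → H}
    (hf : IsMultilinearOn F I f) (x y : ∀ i, G i) : mixedDiff I f x y = f (y - x) := by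
  suffices h : ∀ T ⊆ I, ∀ x, mixedDiff T f x y = f (T.piecewise (y - x) x) by
    rw [h I subset_rfl]
    exact hf.dependsOn fun i hi => Finset.piecewise_eq_of_mem _ _ _ hi
  intro T
  induction T using Finset.induction_on with
  | empty => simp [mixedDiff_empty]
  | insert i T hi ih =>
    intro hT x
    obtain ⟨hiI, hTI⟩ := Finset.insert_subset_iff.1 hT
    have hfirst : T.piecewise (y - update x i (y i)) (update x i (y i)) =
        update (T.piecewise (y - x) x) i (y i - x i + x i) := by
      ext j
      by_cases hj : j = i
      · subst hj; simp [hi]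
      · by_cases hjT : j ∈ T <;> simp [hj, hjT]
    have hsecond : T.piecewise (y - x) x = update (T.piecewise (y - x) x) i (x i) := by
      rw [eq_comm, update_eq_self_iff, Finset.piecewise_eq_of_notMem _ _ _ hi]
    rw [mixedDiff_insert hi, ih hTI, ih hTI, hfirst, hf.map_update_add i hiI, ← hsecond,
      add_sub_cancel_right, Finset.piecewise_insert, Pi.sub_apply]

end Linear

section Multiaffine

variable {F : Type*} [Field F] [∀ i, AddCommGroup (G i)] [∀ i, Module F (G i)] [Module F H]

theorem exists_linearMap_mixedDiff_update {f : (∀ i, G i) → H} (hf : IsMultiaffine F f)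
    {I : Finset ι} {i : ι} (hi : i ∈ I) (x : ∀ i, G i) :
    ∃ L : G i →ₗ[F] H, ∀ v, mixedDiff I f 0 (update x i v) = L v := by
  choose g h hg using fun S : Finset ι => hf i (S.piecewise x 0)
  refine ⟨∑ S ∈ (I.erase i).powerset, (-1 : ℤ) ^ (I.erase i \ S).card • g S, fun v => ?_⟩
  rw [← Finset.insert_erase hi, mixedDiff_insert (Finset.notMem_erase _ _), Finset.insert_erase hi,
    mixedDiff, mixedDiff, ← Finset.sum_sub_distrib, LinearMap.sum_apply]
  refine Finset.sum_congr rfl fun S hS => ?_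
  have hiS : i ∉ S := fun h => Finset.notMem_erase i I (Finset.mem_powerset.1 hS h)
  have hupdate : S.piecewise (update x i v) 0 = update (S.piecewise x 0) i 0 := by
    ext j
    by_cases hj : j = i
    · subst hj; simp [hiS]
    · simp [Finset.piecewise, hj]
  rw [← Finset.update_piecewise_of_notMem _ _ _ hiS, hupdate, update_idem, update_self, hg, hg,
    map_zero, zero_add, ← smul_sub, add_sub_cancel_right, LinearMap.smul_apply]

theorem isMultilinearOn_mixedDiff {f : (∀ i, G i) → H} (hf : IsMultiaffine F f) (I : Finset ι) :
    IsMultilinearOn F I (mixedDiff I f 0) where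
  dependsOn x y h := Finset.sum_congr rfl fun S hS => congrArg _ <| congrArg f <|
    S.piecewise_congr (fun i hi => h i (Finset.mem_powerset.1 hS hi)) fun _ _ => rfl
  map_update_add i hi x v w := by
    obtain ⟨L, hL⟩ := exists_linearMap_mixedDiff_update hf hi x
    rw [hL, hL, hL, map_add]
  map_update_smul i hi x t v := by
    obtain ⟨L, hL⟩ := exists_linearMap_mixedDiff_update hf hi x
    rw [hL, hL, map_smul]

end Multiaffine

namespace HasCodensityLE

variable [Fintype ι] [∀ i, Finite (G i)] {Q : ℕ}

theorem mixedDiff {f : (∀ i, G i) → H} (h : HasCodensityLE {x | f x = 0} Q) (I : Finset ι) :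
    HasCodensityLE {p : (∀ i, G i) × (∀ i, G i) | mixedDiff I f p.1 p.2 = 0}
      (Q ^ 2 ^ Fintype.card ι) := by
  classical
  have := fun i => Fintype.ofFinite (G i)
  have hcopies := h.forall_copies 1
  let pair : (∀ i, Fin 2 → G i) ≃ (∀ i, G i) × (∀ i, G i) :=
    (Equiv.piComm _).trans (finTwoArrowEquiv _)
  rw [HasCodensityLE, Nat.card_congr pair] at hcopies
  refine hcopies.trans (Nat.mul_le_mul_right _ ?_)
  refine Set.ncard_le_ncard_of_injOn pair (fun y hy => Finset.sum_eq_zero fun S _ => ?_)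
    pair.injective.injOn
  have hcorner : S.piecewise (pair y).2 (pair y).1 = fun i => y i (if i ∈ S then 1 else 0) := by
    ext i
    by_cases hi : i ∈ S <;> simp [pair, hi]
  rw [hcorner]
  exact smul_eq_zero_of_right _ (hy _)

theorem of_sub {X : Type*} [AddGroup X] [Finite X] {A : Set X}
    (h : HasCodensityLE {p : X × X | p.2 - p.1 ∈ A} Q) : HasCodensityLE A Q := by
  have hshear : {p : X × X | p.2 - p.1 ∈ A}.ncard ≤ Nat.card X * A.ncard := by
    rw [← Set.ncard_univ, ← Set.ncard_prod]
    refine Set.ncard_le_ncard_of_injOn (fun p => (p.1, p.2 - p.1)) (fun p hp => ⟨trivial, hp⟩) ?_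
    rintro ⟨a, b⟩ - ⟨c, d⟩ - hp
    obtain ⟨rfl, hsub⟩ := Prod.mk.inj hp
    exact congrArg _ (sub_left_injective hsub)
  refine Nat.le_of_mul_le_mul_left ?_ (Nat.card_pos (α := X))
  rw [← Nat.card_prod, ← mul_assoc]
  exact h.trans (Nat.mul_le_mul_right Q hshear)

/-- The mixed difference in the directions of a maximal index set `I` only sees the terms which are
multilinear on `I`. -/
theorem sum_filter_eq_maximal {F : Type*} [Ring F] [∀ i, AddCommGroup (G i)]
    [∀ i, Module F (G i)] [Module F H] {κ : Type*} [Fintype κ] {J : κ → Finset ι}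
    {B : κ → (∀ i, G i) → H} (hB : ∀ j, IsMultilinearOn F (J j) (B j)) {I : Finset ι}
    (hI : ∀ j, I ⊆ J j → J j = I) {lam : κ → F}
    (h : HasCodensityLE {x | ∑ j, lam j • B j x = 0} Q) :
    HasCodensityLE {x | ∑ j with J j = I, lam j • B j x = 0} (Q ^ 2 ^ Fintype.card ι) := by
  refine of_sub ((congrArg (HasCodensityLE · _) (Set.ext fun p => ?_)).mp (h.mixedDiff I))
  refine iff_of_eq (congrArg (· = 0) ?_)
  rw [mixedDiff_sum_smul, ← Finset.sum_filter_add_sum_filter_not _ (J · = I),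
    Finset.sum_eq_zero (s := {j | ¬ J j = I}) fun j hj => ?_, add_zero]
  · refine Finset.sum_congr rfl fun j hj => congrArg _ ?_
    have hBj := hB j
    rw [(Finset.mem_filter.1 hj).2] at hBj
    exact hBj.mixedDiff_eq p.1 p.2
  · rw [mixedDiff_eq_zero (hB j).dependsOn (mt (hI j) (Finset.mem_filter.1 hj).2), smul_zero]

end HasCodensityLE

end MixedDifference

/-- The layers of `β` internally `1 / Q`-approximate `Z`; the layers used are those over `S`. -/
def InnerApproximates {X Y : Type*} (β : X → Y) (Z : Set X) (Q : ℕ) : Prop :=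
  ∃ S : Set Y, β ⁻¹' S ⊆ Z ∧ (Z \ β ⁻¹' S).ncard * Q ≤ Nat.card X

namespace InnerApproximates

variable {X Y : Type*} {β : X → Y} {Z : Set X} {Q : ℕ}

theorem of_not_hasCodensityLE (hZ : ¬ HasCodensityLE Z Q) : InnerApproximates β Z Q :=
  ⟨∅, by simp, by simpa using (not_le.1 hZ).le⟩

theorem of_comp {Y' : Type*} (φ : Y → Y') (h : InnerApproximates (φ ∘ β) Z Q) :
    InnerApproximates β Z Q :=
  let ⟨S, hS⟩ := h
  ⟨φ ⁻¹' S, hS⟩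

theorem of_fibers [Finite X] {W : Type*} [Finite W] {w : X → W} {Z' : W → Set X}
    (hZ : ∀ x, x ∈ Z ↔ x ∈ Z' (w x)) (h : ∀ b, InnerApproximates β (Z' b) (Nat.card W * Q)) :
    InnerApproximates (fun x => (β x, w x)) Z Q := by
  have := Fintype.ofFinite W
  choose S hsub hcard using h
  refine ⟨{y | y.1 ∈ S y.2}, fun x hx => (hZ x).2 (hsub _ hx), ?_⟩
  rcases isEmpty_or_nonempty X with hX | ⟨⟨x₀⟩⟩
  · simp [Set.eq_empty_of_isEmpty]
  have hcover : Z \ (fun x => (β x, w x)) ⁻¹' {y | y.1 ∈ S y.2} ⊆ ⋃ b, Z' b \ β ⁻¹' S b :=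
    fun x hx => Set.mem_iUnion.2 ⟨w x, (hZ x).1 hx.1, hx.2⟩
  have hncard := (Set.ncard_le_ncard hcover (Set.toFinite _)).trans
    (Set.ncard_iUnion_le_of_fintype _)
  have : Nonempty W := ⟨w x₀⟩
  refine Nat.le_of_mul_le_mul_left ?_ (Nat.card_pos (α := W))
  calc Nat.card W * ((Z \ (fun x => (β x, w x)) ⁻¹' {y | y.1 ∈ S y.2}).ncard * Q)
      ≤ Nat.card W * ((∑ b, (Z' b \ β ⁻¹' S b).ncard) * Q) := by gcongr
    _ = ∑ b, (Z' b \ β ⁻¹' S b).ncard * (Nat.card W * Q) := by rw [← Finset.sum_mul]; ring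
    _ ≤ ∑ _ : W, Nat.card X := Finset.sum_le_sum fun b _ => hcard b
    _ = Nat.card W * Nat.card X := by simp

end InnerApproximates

/-- On each fiber of `α` the products become linear combinations of the `A p`. -/
theorem InnerApproximates.sum_elim {X : Type*} [Finite X] {F : Type*} [Field F] [Finite F]
    {H : Type*} [AddCommGroup H] [Module F H] {κ P σ : Type*} [Fintype κ] [Fintype P]
    {B : κ → X → H} {s : κ → Prop} [DecidablePred s] {α : P → X → F} {A : P → X → H} {lam : κ → F}
    {a : P → F} (hs : ∀ x, ∑ j with s j, lam j • B j x = ∑ p, (a p * α p x) • A p x)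
    {β : X → σ → F} {e : ℕ}
    (h : ∀ b : {j // ¬ s j} ⊕ P → F, InnerApproximates β
      {x | ∑ j, b j • (Sum.elim (fun j : {j // ¬ s j} => B j) A : _ → X → H) j x = 0}
      (Nat.card F ^ (e + Fintype.card P))) :
    InnerApproximates (fun x => Sum.elim (β x) fun p => α p x) {x | ∑ j, lam j • B j x = 0}
      (Nat.card F ^ e) := by
  refine InnerApproximates.of_comp (Equiv.sumArrowEquivProdArrow σ P F) ?_
  refine InnerApproximates.of_fibers (w := fun x p => α p x)
    (Z' := fun w => {x | ∑ j, Sum.elim (fun j : {j // ¬ s j} => lam j) (fun p => a p * w p) j •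
      (Sum.elim (fun j : {j // ¬ s j} => B j) A : _ → X → H) j x = 0}) (fun x => ?_) fun w => ?_
  · refine iff_of_eq (congrArg (· = 0) ?_)
    rw [← Finset.sum_filter_add_sum_filter_not _ s, hs, Fintype.sum_sum_type, add_comm]
    refine congrArg (· + _) ?_
    exact Finset.sum_subtype _ (by simp) fun j => lam j • B j x
  · rw [Nat.card_fun, Nat.card_eq_fintype_card (α := P), ← pow_add, add_comm]
    exact h _

section CommonPartition

variable {ι : Type*} [DecidableEq ι] {F : Type*} [Field F] {G : ι → Type*}
  [∀ i, AddCommGroup (G i)] [∀ i, Module F (G i)] {H : Type*} [AddCommGroup H] [Module F H]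

/-- Partition rank decompositions of a basis of the span of `Λ` serve all of `Λ`. -/
theorem exists_common_partition {I : Finset ι} {n : ℕ} {V : Type*} [AddCommGroup V] [Module F V]
    [FiniteDimensional F V] (T : V →ₗ[F] (∀ i, G i) → H) {Λ : Set V}
    (hΛ : ∀ v ∈ Λ, PartitionRankLE F I (T v) n) :
    ∃ (P : Type) (_ : Fintype P) (J : P → Finset ι) (α : P → (∀ i, G i) → F)
      (A : P → (∀ i, G i) → H), Fintype.card P ≤ Module.finrank F V * n ∧
      (∀ p, (J p).Nonempty ∧ J p ⊆ I) ∧ (∀ p, IsMultilinearOn F (J p) (α p)) ∧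
      (∀ p, IsMultilinearOn F (I \ J p) (A p)) ∧
      ∀ v ∈ Λ, ∃ a : P → F, ∀ x, T v x = ∑ p, (a p * α p x) • A p x := by
  obtain ⟨b, hbΛ, hspan, -⟩ := Submodule.exists_fun_fin_finrank_span_eq F Λ
  choose m hm J α A hJ hα hA hsum using fun l => hΛ (b l) (hbΛ l)
  refine ⟨Σ l, Fin (m l), inferInstance, fun p => J p.1 p.2, fun p => α p.1 p.2,
    fun p => A p.1 p.2, ?_, fun p => hJ _ _, fun p => hα _ _, fun p => hA _ _, fun v hv => ?_⟩
  · rw [Fintype.card_sigma]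
    refine (Finset.sum_le_card_nsmul _ _ n fun l _ => (Fintype.card_fin _).trans_le (hm l)).trans ?_
    rw [Finset.card_univ, Fintype.card_fin, smul_eq_mul]
    exact Nat.mul_le_mul_right n (Submodule.finrank_le _)
  · have hv' : v ∈ Submodule.span F (Set.range b) := by
      rw [hspan]
      exact Submodule.subset_span hv
    obtain ⟨a, rfl⟩ := (Submodule.mem_span_range_iff_exists_fun F).1 hv'
    refine ⟨fun p => a p.1, fun x => ?_⟩
    simp only [map_sum, map_smul, Finset.sum_apply, Pi.smul_apply, hsum, Finset.smul_sum, mul_smul,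
      Fintype.sum_sigma]

theorem exists_common_partition_of_maximal (n : ℕ) : ∃ C : ℕ, ∀ {ι : Type u} [Fintype ι]
    [DecidableEq ι], Fintype.card ι ≤ n → ∀ {F : Type*} [Field F] [Finite F] {G : ι → Type*}
    [∀ i, AddCommGroup (G i)] [∀ i, Module F (G i)] [∀ i, Finite (G i)] {H : Type*}
    [AddCommGroup H] [Module F H] {κ : Type*} [Fintype κ] {J : κ → Finset ι}
    {B : κ → (∀ i, G i) → H}, (∀ j, IsMultilinearOn F (J j) (B j)) → ∀ {I : Finset ι},
    (∀ j, I ⊆ J j → J j = I) → ∀ e : ℕ,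
    ∃ (P : Type) (_ : Fintype P) (J' : P → Finset ι) (α : P → (∀ i, G i) → F)
      (A : P → (∀ i, G i) → H),
      Fintype.card P ≤ Fintype.card κ * (C * (e * 2 ^ Fintype.card ι + 1) ^ (n + 2)) ∧
      (∀ p, (J' p).Nonempty ∧ J' p ⊆ I) ∧ (∀ p, IsMultilinearOn F (J' p) (α p)) ∧
      (∀ p, IsMultilinearOn F (I \ J' p) (A p)) ∧
      ∀ lam : κ → F, HasCodensityLE {x | ∑ j, lam j • B j x = 0} (Nat.card F ^ e) →
        ∃ a : P → F, ∀ x, ∑ j with J j = I, lam j • B j x = ∑ p, (a p * α p x) • A p x := by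
  obtain ⟨C, hC⟩ := exists_partitionRankLE.{u} n
  refine ⟨C, fun {ι} _ _ hn {F} _ _ {G} _ _ _ {H} _ _ {κ} _ {J} {B} hB {I} hI e => ?_⟩
  let T : (κ → F) →ₗ[F] (∀ i, G i) → H :=
    ∑ j with J j = I, (LinearMap.proj j : (κ → F) →ₗ[F] F).smulRight (B j)
  have hT : ∀ lam x, T lam x = ∑ j with J j = I, lam j • B j x := fun lam x => by
    simp only [T, LinearMap.sum_apply, LinearMap.smulRight_apply, LinearMap.proj_apply,
      Finset.sum_apply, Pi.smul_apply]
  have hTI : ∀ lam, IsMultilinearOn F I (T lam) := fun lam => by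
    rw [funext (hT lam)]
    refine IsMultilinearOn.sum fun j hj => ?_
    have hBj := hB j
    rw [(Finset.mem_filter.1 hj).2] at hBj
    exact hBj.linearMap_comp (LinearMap.lsmul F H (lam j))
  have hrank : ∀ lam ∈ {lam : κ → F | HasCodensityLE {x | ∑ j, lam j • B j x = 0} (Nat.card F ^ e)},
      PartitionRankLE F I (T lam) (C * (e * 2 ^ Fintype.card ι + 1) ^ (n + 2)) := fun lam hlam => by
    refine hC hn (hTI lam) ?_
    simp only [hT, pow_mul]
    exact HasCodensityLE.sum_filter_eq_maximal hB hI hlam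
  have hcommon := exists_common_partition T hrank
  simpa only [hT, Module.finrank_fintype_fun_eq_card, Set.mem_ofPred_eq] using hcommon

end CommonPartition

theorem exists_size_bound (C₁ D₁ C₂ D₂ N : ℕ) : ∃ C D : ℕ, ∀ r e g s : ℕ,
    g ≤ r * (C₁ * (e * N + 1) ^ D₁) → s ≤ C₂ * ((r + g + 1) * (e + g + 1)) ^ D₂ →
      s + g ≤ C * ((r + 1) * (e + 1)) ^ D := by
  let C₃ := C₁ * (N + 1) ^ D₁
  refine ⟨C₂ * (C₃ + 1) ^ (2 * D₂) + C₃, 2 * (D₁ + 1) * D₂ + (D₁ + 1), fun r e g s hg hs => ?_⟩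
  set U := (r + 1) * (e + 1)
  have hU : 1 ≤ U := Nat.succ_le_of_lt (by positivity)
  have hrU : r + 1 ≤ U := Nat.le_mul_of_pos_right _ e.succ_pos
  have heU : e + 1 ≤ U := Nat.le_mul_of_pos_left _ r.succ_pos
  have hUpow : U ≤ U ^ (D₁ + 1) := Nat.le_self_pow D₁.succ_ne_zero _
  have hgU : g ≤ C₃ * U ^ (D₁ + 1) := by
    calc g ≤ r * (C₁ * (e * N + 1) ^ D₁) := hg
      _ ≤ U * (C₁ * ((N + 1) * U) ^ D₁) := by
        gcongr
        · omega
        · nlinarith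
      _ = C₃ * U ^ (D₁ + 1) := by simp only [C₃]; rw [mul_pow]; ring
  have hr : r + g + 1 ≤ (C₃ + 1) * U ^ (D₁ + 1) := by rw [add_one_mul]; omega
  have he : e + g + 1 ≤ (C₃ + 1) * U ^ (D₁ + 1) := by rw [add_one_mul]; omega
  have hsU : s ≤ C₂ * (C₃ + 1) ^ (2 * D₂) * U ^ (2 * (D₁ + 1) * D₂) := by
    calc s ≤ C₂ * ((r + g + 1) * (e + g + 1)) ^ D₂ := hs
      _ ≤ C₂ * (((C₃ + 1) * U ^ (D₁ + 1)) * ((C₃ + 1) * U ^ (D₁ + 1))) ^ D₂ := by gcongr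
      _ = C₂ * (C₃ + 1) ^ (2 * D₂) * U ^ (2 * (D₁ + 1) * D₂) := by
        rw [← sq, ← pow_mul, mul_pow, ← pow_mul]
        ring
  rw [add_mul]
  exact add_le_add (hsU.trans <| Nat.mul_le_mul_left _ <| Nat.pow_le_pow_right hU le_self_add)
    (hgU.trans <| Nat.mul_le_mul_left _ <| Nat.pow_le_pow_right hU le_add_self)

section Induction

/-- For families `B` of maps which are multilinear on members of `𝒥`, the varieties cut out by the
combinations of the `B j` are simultaneously approximated by the layers of a map `β` with at most
`C * ((#κ + 1) * (e + 1)) ^ D` coordinates, each of which is multilinear. -/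
def InnerApproxBound (ι : Type s) [DecidableEq ι]
    (𝒥 : Finset (Finset ι)) (C D : ℕ) : Prop :=
  ∀ {F : Type u} [Field F] [Finite F] {G : ι → Type v} [∀ i, AddCommGroup (G i)]
    [∀ i, Module F (G i)] [∀ i, Finite (G i)] {H : Type w} [AddCommGroup H] [Module F H]
    {κ : Type t} [Fintype κ] {J : κ → Finset ι} {B : κ → (∀ i, G i) → H}, (∀ j, J j ∈ 𝒥) →
    (∀ j, IsMultilinearOn F (J j) (B j)) → ∀ e : ℕ,
    ∃ (σ : Type) (_ : Fintype σ) (β : (∀ i, G i) → σ → F),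
      Fintype.card σ ≤ C * ((Fintype.card κ + 1) * (e + 1)) ^ D ∧
      (∀ t, ∃ J', IsMultilinearOn F J' fun x => β x t) ∧
      ∀ lam : κ → F, InnerApproximates β {x | ∑ j, lam j • B j x = 0} (Nat.card F ^ e)

variable {ι : Type s} [Finite ι] [DecidableEq ι] {𝒥 : Finset (Finset ι)}

theorem InnerApproxBound.of_erase {I : Finset ι} (hmax : ∀ J ∈ 𝒥, I ⊆ J → J = I)
    (hlower : ∀ J ⊂ I, J ∈ 𝒥) {C D : ℕ} (h : InnerApproxBound.{s, t, u, v, w} ι (𝒥.erase I) C D) :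
    ∃ C D, InnerApproxBound.{s, t, u, v, w} ι 𝒥 C D := by
  have := Fintype.ofFinite ι
  obtain ⟨C₁, hC₁⟩ := exists_common_partition_of_maximal (Fintype.card ι)
  obtain ⟨C', D', hsize⟩ := exists_size_bound C₁ (Fintype.card ι + 2) C D (2 ^ Fintype.card ι)
  refine ⟨C', D', fun {F} _ _ {G} _ _ _ {H} _ _ {κ} _ {J B} hJ hB e => ?_⟩
  obtain ⟨P, _, J', α, A, hP, hJ', hα, hA, hdecomp⟩ := hC₁ le_rfl hB (fun j => hmax _ (hJ j)) e
  have hssub : ∀ p, I \ J' p ⊂ I := fun p =>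
    Finset.sdiff_ssubset (hJ' p).2 (hJ' p).1
  obtain ⟨σ, _, β, hσ, hβ, happrox⟩ := h (κ := {j // J j ≠ I} ⊕ P)
    (J := Sum.elim (fun j => J j) fun p => I \ J' p) (B := Sum.elim (fun j => B j) A)
    (Sum.rec (fun j => Finset.mem_erase.2 ⟨j.2, hJ j⟩) fun p =>
      Finset.mem_erase.2 ⟨(hssub p).ne, hlower _ (hssub p)⟩)
    (Sum.rec (fun j => hB j) hA) (e + Fintype.card P)
  refine ⟨σ ⊕ P, inferInstance, fun x => Sum.elim (β x) fun p => α p x, ?_,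
    Sum.rec hβ fun p => ⟨_, hα p⟩, fun lam => ?_⟩
  · rw [Fintype.card_sum]
    refine hsize _ e _ _ hP (hσ.trans ?_)
    rw [Fintype.card_sum]
    gcongr
    exact Fintype.card_subtype_le _
  · by_cases hlam : HasCodensityLE {x | ∑ j, lam j • B j x = 0} (Nat.card F ^ e)
    · obtain ⟨a, ha⟩ := hdecomp lam hlam
      exact InnerApproximates.sum_elim ha happrox
    · exact InnerApproximates.of_not_hasCodensityLE hlam

theorem exists_innerApproxBound (h𝒥 : IsLowerSet (𝒥 : Set (Finset ι))) :
    ∃ C D, InnerApproxBound.{s, t, u, v, w} ι 𝒥 C D := by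
  induction 𝒥 using Finset.strongInduction with
  | H 𝒥 ih =>
    rcases 𝒥.eq_empty_or_nonempty with rfl | hne
    · refine ⟨0, 0, fun {F} _ _ {G} _ _ _ {H} _ _ {κ} _ {J B} hJ _ e => ?_⟩
      have : IsEmpty κ := ⟨fun j => Finset.notMem_empty _ (hJ j)⟩
      exact ⟨Empty, inferInstance, fun _ => Empty.elim, by simp, Empty.rec,
        fun lam => ⟨Set.univ, by simp, by simp⟩⟩
    · obtain ⟨I, hI, hmax⟩ := 𝒥.exists_maximal hne
      have hmax : ∀ J ∈ 𝒥, I ⊆ J → J = I := fun J hJ hIJ => (hmax hJ hIJ).antisymm hIJ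
      obtain ⟨C, D, h⟩ := ih (𝒥.erase I) (Finset.erase_ssubset hI) fun J J' hJ' hJ => by
        obtain ⟨hne, hJ⟩ := Finset.mem_erase.1 hJ
        exact Finset.mem_erase.2 ⟨fun h => hne (hmax J hJ (h ▸ hJ')), h𝒥 hJ' hJ⟩
      exact h.of_erase hmax fun J hJ => h𝒥 hJ.subset hI

end Induction

namespace InnerApproximates

variable {X Y : Type*} {β : X → Y} {Z : Set X} {Q : ℕ}

theorem of_forall_mem (hZ : ∀ x, x ∈ Z) : InnerApproximates β Z Q :=
  ⟨Set.univ, fun x _ => hZ x, by simp⟩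

theorem one [Finite X] : InnerApproximates β Z 1 :=
  ⟨∅, by simp, by simpa using Set.ncard_le_card Z⟩

theorem exists_layers [Finite Y] (h : InnerApproximates β Z Q) :
    ∃ (m : ℕ) (μ : Fin m → Y), (∀ j, {x | β x = μ j} ⊆ Z) ∧
      Nat.card ↥(Z \ ⋃ j, {x | β x = μ j}) * Q ≤ Nat.card X := by
  obtain ⟨S, hSZ, hcard⟩ := h
  let E := Finite.equivFin S
  have hlayers : ⋃ j, {x | β x = (E.symm j : Y)} = β ⁻¹' S := by
    ext x
    simp only [Set.mem_iUnion, Set.mem_ofPred_eq, Set.mem_preimage]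
    refine ⟨fun ⟨j, hj⟩ => hj ▸ (E.symm j).2, fun hx => ⟨E ⟨β x, hx⟩, ?_⟩⟩
    rw [E.symm_apply_apply]
  refine ⟨_, fun j => E.symm j, fun j => ?_, ?_⟩
  · exact (Set.subset_iUnion _ j).trans (hlayers.trans_subset hSZ)
  · rwa [hlayers, Nat.card_coe_set_eq]

end InnerApproximates

section Multiaffine

variable {ι : Type*} [DecidableEq ι] {F : Type*} [Field F] {G : ι → Type*}
  [∀ i, AddCommGroup (G i)] [∀ i, Module F (G i)]

theorem isMultiaffine_of_isMultilinearOn {σ : Type*} {β : (∀ i, G i) → σ → F}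
    (hβ : ∀ t, ∃ J, IsMultilinearOn F J fun x => β x t) : IsMultiaffine F β := by
  intro i x
  have haffine : ∀ t, ∃ (g : G i →ₗ[F] F) (h : F), ∀ y, β (update x i y) t = g y + h := by
    intro t
    obtain ⟨J, hJ⟩ := hβ t
    by_cases hi : i ∈ J
    · exact ⟨IsLinearMap.mk' (fun y => β (update x i y) t)
        ⟨hJ.map_update_add i hi x, hJ.map_update_smul i hi x⟩, 0, fun y => (add_zero _).symm⟩
    · exact ⟨0, β x t, fun y => by
        simpa using hJ.dependsOn fun j hj => update_of_ne (ne_of_mem_of_not_mem hj hi) y x⟩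
  choose g h hg using haffine
  exact ⟨LinearMap.pi g, h, fun y => funext fun t => hg t y⟩

end Multiaffine

theorem exists_isMultiaffine_innerApproximates (ι : Type s) [Finite ι] [DecidableEq ι] :
    ∃ C D : ℕ, 0 < D ∧ ∀ {F : Type u} [Field F] [Finite F] {G : ι → Type v}
      [∀ i, AddCommGroup (G i)] [∀ i, Module F (G i)] [∀ i, Finite (G i)] {H : Type w}
      [AddCommGroup H] [Module F H] {r : ℕ} {B : Fin r → (∀ i, G i) → H},
      (∀ j, IsMultiaffine F (B j)) → ∀ e : ℕ,
      ∃ s ≤ C * (r * e) ^ (2 * D), ∃ β : (∀ i, G i) → Fin s → F, IsMultiaffine F β ∧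
        ∀ lam : Fin r → F,
          InnerApproximates β {x | ∑ j, lam j • B j x = 0} (Nat.card F ^ e) := by
  have := Fintype.ofFinite ι
  obtain ⟨C, D, h⟩ := exists_innerApproxBound.{s, s, u, v, w} (ι := ι) (𝒥 := Finset.univ)
    fun _ _ _ _ => Finset.mem_univ _
  refine ⟨C * (2 * (2 ^ Fintype.card ι + 1)) ^ D, D + 1, D.succ_pos,
    fun {F} _ _ {G} _ _ _ {H} _ _ {r B} hB e => ?_⟩
  rcases Nat.eq_zero_or_pos (r * e) with hre | hre
  · refine ⟨0, Nat.zero_le _, fun _ => 0, isMultiaffine_of_isMultilinearOn fun t => t.elim0,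
      fun lam => ?_⟩
    rcases Nat.mul_eq_zero.1 hre with rfl | rfl
    · exact InnerApproximates.of_forall_mem fun x => Fin.sum_univ_zero _
    · exact InnerApproximates.one
  obtain ⟨σ, _, β, hσ, hβ, happrox⟩ := h (κ := Fin r × Finset ι) (J := Prod.snd)
    (B := fun p => mixedDiff p.2 (B p.1) 0) (fun _ => Finset.mem_univ _)
    (fun p => isMultilinearOn_mixedDiff (hB p.1) p.2) e
  let E := Fintype.equivFin σ
  refine ⟨Fintype.card σ, hσ.trans ?_, fun x t => β x (E.symm t),
    isMultiaffine_of_isMultilinearOn fun t => hβ _, fun lam => ?_⟩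
  · have hr : 1 ≤ r := Nat.pos_of_mul_pos_right hre
    have he : 1 ≤ e := Nat.pos_of_mul_pos_left hre
    rw [Fintype.card_prod, Fintype.card_fin, Fintype.card_finset, mul_assoc]
    refine Nat.mul_le_mul_left C ?_
    calc ((r * 2 ^ Fintype.card ι + 1) * (e + 1)) ^ D
        ≤ ((r * 2 ^ Fintype.card ι + r) * (e + e)) ^ D := by gcongr
      _ = (2 * (2 ^ Fintype.card ι + 1)) ^ D * (r * e) ^ D := by rw [← mul_pow]; ring
      _ ≤ (2 * (2 ^ Fintype.card ι + 1)) ^ D * (r * e) ^ (2 * (D + 1)) := by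
        gcongr
        omega
  · have hsum : ∀ x, ∑ p : Fin r × Finset ι, lam p.1 • mixedDiff p.2 (B p.1) 0 x =
        ∑ j, lam j • B j x := fun x => by
      rw [Fintype.sum_prod_type]
      refine Finset.sum_congr rfl fun j _ => ?_
      dsimp only
      rw [← Finset.smul_sum, ← Finset.powerset_univ, sum_mixedDiff, Finset.piecewise_univ]
    have happrox_lam := happrox fun p => lam p.1
    simp only [hsum] at happrox_lam
    refine InnerApproximates.of_comp (· ∘ E) ?_
    simpa only [Function.comp_def, E.symm_apply_apply] using happrox_lam

theorem natCeil_logb_sq_le {q : ℕ} (hq : 1 < q) {x : ℝ} (hx : 0 < x) :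
    (⌈Real.logb q x⌉₊ : ℝ) ^ 2 ≤ Real.logb q (q * x) ^ 2 := by
  have hqR : (1 : ℝ) < q := Nat.one_lt_cast.2 hq
  rw [Real.logb_mul (by positivity) hx.ne', Real.logb_self_eq_one hqR]
  rcases le_total (Real.logb q x) 0 with hneg | hpos
  · rw [Nat.ceil_eq_zero.2 hneg, Nat.cast_zero, zero_pow two_ne_zero]
    positivity
  · exact pow_le_pow_left₀ (Nat.cast_nonneg _)
      ((Nat.ceil_lt_add_one hpos).le.trans_eq (add_comm _ _)) 2

theorem le_pow_natCeil_logb {q : ℕ} (hq : 1 < q) {x : ℝ} (hx : 0 < x) :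
    x ≤ (q : ℝ) ^ ⌈Real.logb q x⌉₊ := by
  rw [← Real.rpow_natCast, ← Real.logb_le_iff_le_rpow (Nat.one_lt_cast.2 hq) hx]
  exact Nat.le_ceil _

end InnerApproximation

open InnerApproximation in
theorem inner_approximation_of_varieties_general (ι : Type s) [Fintype ι] [DecidableEq ι] :
    ∃ C D : ℝ, 0 < C ∧ 0 < D ∧
      ∀ (F : Type u) [Field F] [Fintype F] (G : ι → Type v) [∀ i, AddCommGroup (G i)]
        [∀ i, Module F (G i)] [∀ i, Fintype (G i)] (H : Type w) [AddCommGroup H] [Module F H]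
        (ε : ℝ), 0 < ε →
      ∀ (r : ℕ) (B : Fin r → ((∀ i, G i) → H)), (∀ j, IsMultiaffine F (B j)) →
      ∃ s : ℕ, (s : ℝ) ≤ C * (r * Real.logb (Fintype.card F) (Fintype.card F * ε⁻¹)) ^ D ∧
        ∃ β : (∀ i, G i) → (Fin s → F), IsMultiaffine F β ∧ ∀ lam : Fin r → F,
          ∃ (m : ℕ) (μ : Fin m → (Fin s → F)),
            (∀ j, {x : ∀ i, G i | β x = μ j} ⊆ {x | ∑ i, lam i • B i x = 0}) ∧
            (Nat.card ↥({x : ∀ i, G i | ∑ i, lam i • B i x = 0} \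
              ⋃ j, {x : ∀ i, G i | β x = μ j}) : ℝ) ≤ ε * Fintype.card (∀ i, G i) := by
  obtain ⟨C, D, hD, h⟩ := exists_isMultiaffine_innerApproximates.{s, u, v, w} ι
  refine ⟨C + 1, (2 * D : ℕ), by positivity, by positivity,
    fun F _ _ G _ _ _ H _ _ ε hε r B hB => ?_⟩
  have hq : 1 < Fintype.card F := Fintype.one_lt_card
  set e := ⌈Real.logb (Fintype.card F) ε⁻¹⌉₊
  obtain ⟨s, hs, β, hβ, happrox⟩ := h hB e
  refine ⟨s, ?_, β, hβ, fun lam => ?_⟩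
  · rw [Real.rpow_natCast]
    calc (s : ℝ) ≤ C * ((r * e) ^ 2) ^ D := by rw [← pow_mul]; exact_mod_cast hs
      _ ≤ (C + 1) * ((r * Real.logb (Fintype.card F) (Fintype.card F * ε⁻¹)) ^ 2) ^ D := by
        rw [mul_pow (r : ℝ), mul_pow (r : ℝ)]
        gcongr ?_ * (_ * ?_) ^ D
        · exact le_add_of_nonneg_right zero_le_one
        · exact natCeil_logb_sq_le hq (inv_pos.2 hε)
      _ = _ := by rw [pow_mul]
  · obtain ⟨m, μ, hμ, hcard⟩ := (happrox lam).exists_layers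
    refine ⟨m, μ, hμ, ?_⟩
    rw [Nat.card_eq_fintype_card (α := F), Nat.card_eq_fintype_card (α := ∀ i, G i)] at hcard
    rw [← div_le_iff₀' hε, div_eq_mul_inv]
    refine (mul_le_mul_of_nonneg_left (le_pow_natCeil_logb hq (inv_pos.2 hε))
      (Nat.cast_nonneg _)).trans ?_
    exact_mod_cast hcard

/-- **Simultaneous inner approximation of varieties.**
For every positive integer `k` there are constants `C, D > 0` such that:
given `ε > 0` and multiaffine maps `B 0, …, B (r-1) : G 0 × ⋯ × G (k-1) → H`, with
`Z lam = {x : ∑ i, lam i • B i x = 0}`, there is a multiaffine map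
`β : G 0 × ⋯ × G (k-1) → 𝔽^s` with `s ≤ C (r log_{|𝔽|}(|𝔽| ε⁻¹))^D` whose layers
internally `ε`-approximate every `Z lam`. -/
theorem inner_approximation_of_varieties :
    ∀ k : ℕ, 0 < k → ∃ C D : ℝ, 0 < C ∧ 0 < D ∧
      ∀ (𝔽 : Type) [Field 𝔽] [Fintype 𝔽]
        (G : Fin k → Type) [∀ i, AddCommGroup (G i)] [∀ i, Module 𝔽 (G i)]
        [∀ i, Fintype (G i)] [∀ i, FiniteDimensional 𝔽 (G i)]
        (H : Type) [AddCommGroup H] [Module 𝔽 H] [FiniteDimensional 𝔽 H]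
        (ε : ℝ), 0 < ε →
      ∀ (r : ℕ) (B : Fin r → ((∀ i, G i) → H)), (∀ i, IsMultiaffine 𝔽 (B i)) →
      ∃ s : ℕ,
        (s : ℝ) ≤ C * ((r : ℝ) *
          Real.logb (Fintype.card 𝔽) ((Fintype.card 𝔽 : ℝ) * ε⁻¹)) ^ D ∧
        ∃ β : (∀ i, G i) → (Fin s → 𝔽), IsMultiaffine 𝔽 β ∧
          ∀ lam : Fin r → 𝔽,
            ∃ (m : ℕ) (μ : Fin m → (Fin s → 𝔽)),
              (∀ j, {x : ∀ i, G i | β x = μ j} ⊆ {x | ∑ i, lam i • B i x = 0}) ∧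
              (Nat.card ↥({x : ∀ i, G i | ∑ i, lam i • B i x = 0} \
                  ⋃ j, {x : ∀ i, G i | β x = μ j}) : ℝ)
                ≤ ε * Fintype.card (∀ i, G i) := by
  intro k _
  obtain ⟨C, D, hC, hD, h⟩ := inner_approximation_of_varieties_general (Fin k)
  exact ⟨C, D, hC, hD, fun 𝔽 _ _ G _ _ _ _ H _ _ _ => h 𝔽 G H⟩
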